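/- Let ρ : Fin r → Equiv.Perm (Fin n) be a string C-group in the blocks-of-size-2 setup with m = n/2 ≥ 7. If r ≥ n/2, then the set R ∪ C has at most 2 elements and the set L has at least n/2 − 2 elements. -/

import Mathlib

/-- A string group generated by involutions (sggi): each generator has order 2 and
nonconsecutive generators commute. -/
def IsSggi {n r : ℕ} (ρ : Fin r → Equiv.Perm (Fin n)) : Prop :=
  (∀ i, orderOf (ρ i) = 2) ∧
  ∀ i j : Fin r, 1 < |((i : ℕ) : ℤ) - ((j : ℕ) : ℤ)| → (ρ i * ρ j) ^ 2 = 1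

/-- A string C-group: an sggi satisfying the intersection property. -/
def IsStringC {n r : ℕ} (ρ : Fin r → Equiv.Perm (Fin n)) : Prop :=
  IsSggi ρ ∧ ∀ J K : Set (Fin r),
    Subgroup.closure (ρ '' J) ⊓ Subgroup.closure (ρ '' K) =
      Subgroup.closure (ρ '' (J ∩ K))

open Equiv

/-- The orbit of `x` under a permutation group, as a finset. -/
noncomputable def orbitFinset {α : Type*} [Fintype α] (E : Subgroup (Perm α)) (x : α) : Finset α :=
  (Set.toFinite {y | ∃ g ∈ E, g x = y}).toFinset

/-- The elements of `E` fixing every point of `Z`. -/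
def pointwiseStabilizer {α : Type*} (E : Subgroup (Perm α)) (Z : Finset α) : Subgroup (Perm α) where
  carrier := {g | g ∈ E ∧ ∀ x ∈ Z, g x = x}
  mul_mem' := by
    rintro a c ⟨ha, ha'⟩ ⟨hc, hc'⟩
    exact ⟨mul_mem ha hc, fun x hx => by rw [Perm.mul_apply, hc' x hx, ha' x hx]⟩
  one_mem' := ⟨one_mem _, fun _ _ => rfl⟩
  inv_mem' := by
    rintro a ⟨ha, ha'⟩
    exact ⟨inv_mem ha, fun x hx => by rw [Perm.inv_eq_iff_eq, ha' x hx]⟩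

section ElementaryAbelian

variable {α : Type*} [Fintype α] [DecidableEq α]

theorem mem_orbitFinset {E : Subgroup (Perm α)} {x y : α} :
    y ∈ orbitFinset E x ↔ ∃ g ∈ E, g x = y := by
  simp [orbitFinset]

theorem self_mem_orbitFinset (E : Subgroup (Perm α)) (x : α) : x ∈ orbitFinset E x :=
  mem_orbitFinset.2 ⟨1, one_mem _, rfl⟩

theorem apply_mem_orbitFinset {E : Subgroup (Perm α)} {x y : α} {g : Perm α} (hg : g ∈ E)
    (hy : y ∈ orbitFinset E x) : g y ∈ orbitFinset E x := by
  obtain ⟨h, hh, rfl⟩ := mem_orbitFinset.1 hy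
  exact mem_orbitFinset.2 ⟨g * h, mul_mem hg hh, rfl⟩

theorem orbitFinset_subset {E : Subgroup (Perm α)} {x : α} {Z : Finset α}
    (hZ : ∀ g ∈ E, ∀ y ∈ Z, g y ∈ Z) (hx : x ∈ Z) : orbitFinset E x ⊆ Z := by
  intro y hy
  obtain ⟨g, hg, rfl⟩ := mem_orbitFinset.1 hy
  exact hZ g hg x hx

theorem orbitFinset_eq_of_mem {E : Subgroup (Perm α)} {x y : α} (hy : y ∈ orbitFinset E x) :
    orbitFinset E y = orbitFinset E x := by
  apply Finset.Subset.antisymm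
  · exact orbitFinset_subset (fun g hg y hy => apply_mem_orbitFinset hg hy) hy
  · obtain ⟨g, hg, rfl⟩ := mem_orbitFinset.1 hy
    exact orbitFinset_subset (fun g hg y hy => apply_mem_orbitFinset hg hy)
      (mem_orbitFinset.2 ⟨g⁻¹, inv_mem hg, by simp⟩)

theorem mul_comm_of_sq_eq_one {G : Type*} [Group G] {E : Subgroup G} (hE : ∀ g ∈ E, g * g = 1)
    {g h : G} (hg : g ∈ E) (hh : h ∈ E) : g * h = h * g := by
  have h1 := hE _ hg
  have h2 := hE _ hh
  have h3 := hE _ (mul_mem hg hh)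
  rw [mul_eq_one_iff_eq_inv] at h1 h2 h3
  rw [h3, mul_inv_rev, ← h1, ← h2]

theorem card_orbitFinset_mul_card_pointwiseStabilizer {E : Subgroup (Perm α)}
    (hE : ∀ g ∈ E, g * g = 1) (x : α) :
    (orbitFinset E x).card * Nat.card (pointwiseStabilizer E (orbitFinset E x)) = Nat.card E := by
  have h := (MulAction.stabilizer E x).card_mul_index
  rw [MulAction.index_stabilizer] at h
  have h1 : (MulAction.orbit E x).ncard = (orbitFinset E x).card := by
    rw [← Set.ncard_coe_finset]
    congr 1
    ext y
    rw [Finset.mem_coe, mem_orbitFinset, MulAction.mem_orbit_iff]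
    exact ⟨fun ⟨g, hg⟩ => ⟨g, g.2, hg⟩, fun ⟨g, hg, hy⟩ => ⟨⟨g, hg⟩, hy⟩⟩
  have h2 : Nat.card (MulAction.stabilizer E x) =
      Nat.card (pointwiseStabilizer E (orbitFinset E x)) := by
    refine Nat.card_congr ⟨fun g => ⟨g.1.1, g.1.2, ?_⟩, fun g => ⟨⟨g.1, g.2.1⟩, ?_⟩,
      fun _ => rfl, fun _ => rfl⟩
    · intro y hy
      obtain ⟨k, hk, rfl⟩ := mem_orbitFinset.1 hy
      rw [← Perm.mul_apply, mul_comm_of_sq_eq_one hE g.1.2 hk, Perm.mul_apply]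
      exact congrArg k g.2
    · exact g.2.2 x (self_mem_orbitFinset E x)
  rw [← h, h1, h2, mul_comm]

theorem exists_card_eq_two_pow {E : Subgroup (Perm α)} (hE : ∀ g ∈ E, g * g = 1) :
    ∃ k, Nat.card E = 2 ^ k := by
  apply IsPGroup.iff_card.1
  intro g
  refine ⟨1, Subtype.ext ?_⟩
  simpa [pow_two] using hE g g.2

theorem exists_card_orbitFinset_eq_two_pow {E : Subgroup (Perm α)} (hE : ∀ g ∈ E, g * g = 1)
    (x : α) : ∃ k, (orbitFinset E x).card = 2 ^ k := by
  obtain ⟨k, hk⟩ := exists_card_eq_two_pow hE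
  have h := card_orbitFinset_mul_card_pointwiseStabilizer hE x
  have hd : (orbitFinset E x).card ∣ 2 ^ k := ⟨_, by rw [← hk, h]⟩
  obtain ⟨j, -, hj⟩ := (Nat.dvd_prime_pow Nat.prime_two).1 hd
  exact ⟨j, hj⟩

theorem sq_le_two_pow_two_pow (k : ℕ) : (2 ^ k) ^ 2 ≤ 2 ^ (2 ^ k) := by
  rw [← pow_mul]
  refine Nat.pow_le_pow_right two_pos ?_
  rcases k with _ | _ | k
  · norm_num
  · norm_num
  · have := Nat.lt_two_pow_self (n := k)
    rw [pow_succ, pow_succ]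
    omega

theorem card_sq_le (Z : Finset α) : ∀ E : Subgroup (Perm α), (∀ g ∈ E, g * g = 1) →
    (∀ g ∈ E, ∀ y ∈ Z, g y ∈ Z) →
    Nat.card E ^ 2 ≤ 2 ^ Z.card * Nat.card (pointwiseStabilizer E Z) ^ 2 := by
  induction Z using Finset.strongInduction with
  | H Z ih =>
    intro E hE hZ
    rcases Z.eq_empty_or_nonempty with rfl | ⟨x, hx⟩
    · have : pointwiseStabilizer E ∅ = E := by
        ext g
        exact ⟨fun h => h.1, fun h => ⟨h, by simp⟩⟩
      rw [this]
      simp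
    · have hO := orbitFinset_subset hZ hx
      have hsub : Z \ orbitFinset E x ⊂ Z :=
        Finset.sdiff_ssubset hO ⟨x, self_mem_orbitFinset E x⟩
      have key := ih _ hsub (pointwiseStabilizer E (orbitFinset E x)) (fun g hg => hE g hg.1) ?_
      · have hst : pointwiseStabilizer (pointwiseStabilizer E (orbitFinset E x))
            (Z \ orbitFinset E x) = pointwiseStabilizer E Z := by
          ext g
          constructor
          · rintro ⟨⟨h1, h2⟩, h3⟩
            refine ⟨h1, fun y hy => ?_⟩
            by_cases hyO : y ∈ orbitFinset E x
            · exact h2 y hyO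
            · exact h3 y (Finset.mem_sdiff.2 ⟨hy, hyO⟩)
          · rintro ⟨h1, h2⟩
            exact ⟨⟨h1, fun y hy => h2 y (hO hy)⟩, fun y hy => h2 y (Finset.mem_sdiff.1 hy).1⟩
        rw [hst] at key
        obtain ⟨k, hk⟩ := exists_card_orbitFinset_eq_two_pow hE x
        have hsq : (orbitFinset E x).card ^ 2 ≤ 2 ^ (orbitFinset E x).card := by
          rw [hk]
          exact sq_le_two_pow_two_pow k
        rw [← card_orbitFinset_mul_card_pointwiseStabilizer hE x, mul_pow,
          ← Finset.card_sdiff_add_card_eq_card hO, pow_add, mul_comm (2 ^ _) (2 ^ _), mul_assoc]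
        exact Nat.mul_le_mul hsq key
      · intro g hg y hy
        obtain ⟨hy1, hy2⟩ := Finset.mem_sdiff.1 hy
        refine Finset.mem_sdiff.2 ⟨hZ g hg.1 y hy1, fun h => hy2 ?_⟩
        have := apply_mem_orbitFinset (inv_mem hg.1) h
        simpa using this

theorem eq_one_of_mem_pointwiseStabilizer_compl {E : Subgroup (Perm α)}
    (hsmall : ∀ g ∈ E, g.support.card ≤ 4 → g = 1) {Y : Finset α} (hY4 : Y.card ≤ 4)
    {g : Perm α} (hg : g ∈ pointwiseStabilizer E Yᶜ) : g = 1 := by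
  refine hsmall g hg.1 ((Finset.card_le_card fun y hy => ?_).trans hY4)
  by_contra h
  exact Perm.mem_support.1 hy (hg.2 y (Finset.mem_compl.2 h))

theorem card_le_three_of_invariant {E : Subgroup (Perm α)} (hE : ∀ g ∈ E, g * g = 1)
    (hcard : 2 ^ Fintype.card α ≤ 8 * Nat.card E ^ 2)
    (hsmall : ∀ g ∈ E, g.support.card ≤ 4 → g = 1) {Y : Finset α}
    (hY : ∀ g ∈ E, ∀ y ∈ Y, g y ∈ Y) (hY4 : Y.card ≤ 4) : Y.card ≤ 3 := by
  have h1 := card_sq_le Yᶜ E hE (fun g hg y hy => by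
    rw [Finset.mem_compl] at hy ⊢
    exact fun h => hy (by simpa using hY _ (inv_mem hg) _ h))
  have h2 : pointwiseStabilizer E Yᶜ = ⊥ :=
    (Subgroup.eq_bot_iff_forall _).2
      fun g hg => eq_one_of_mem_pointwiseStabilizer_compl hsmall hY4 hg
  rw [h2, Subgroup.card_bot, one_pow, mul_one] at h1
  have h3 : 2 ^ Y.card * 2 ^ Yᶜ.card = 2 ^ Fintype.card α := by
    rw [← pow_add, Finset.card_add_card_compl]
  have h4 : 2 ^ Y.card ≤ 8 := by
    have : 2 ^ Y.card * 2 ^ Yᶜ.card ≤ 8 * 2 ^ Yᶜ.card := by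
      rw [h3]
      exact hcard.trans (Nat.mul_le_mul_left _ h1)
    exact Nat.le_of_mul_le_mul_right this (by positivity)
  by_contra h
  have : 2 ^ 4 ≤ 2 ^ Y.card := Nat.pow_le_pow_right two_pos (by omega)
  omega

theorem union_invariant {E : Subgroup (Perm α)} {Y Z : Finset α}
    (hY : ∀ g ∈ E, ∀ y ∈ Y, g y ∈ Y) (hZ : ∀ g ∈ E, ∀ y ∈ Z, g y ∈ Z) :
    ∀ g ∈ E, ∀ y ∈ Y ∪ Z, g y ∈ Y ∪ Z := by
  intro g hg y hy
  rcases Finset.mem_union.1 hy with h | h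
  · exact Finset.mem_union_left _ (hY g hg y h)
  · exact Finset.mem_union_right _ (hZ g hg y h)

theorem disjoint_orbitFinset {E : Subgroup (Perm α)} {x y : α} (h : y ∉ orbitFinset E x) :
    Disjoint (orbitFinset E x) (orbitFinset E y) := by
  rw [Finset.disjoint_left]
  intro w hw hw'
  apply h
  rw [← orbitFinset_eq_of_mem hw, orbitFinset_eq_of_mem hw']
  exact self_mem_orbitFinset E y

/-- The points in orbits of length at most four number at most three. -/
theorem card_short_orbits_le_three {E : Subgroup (Perm α)} (hE : ∀ g ∈ E, g * g = 1)
    (hcard : 2 ^ Fintype.card α ≤ 8 * Nat.card E ^ 2)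
    (hsmall : ∀ g ∈ E, g.support.card ≤ 4 → g = 1) {Z : Finset α}
    (hZ : ∀ x ∈ Z, (orbitFinset E x).card ≤ 4) : Z.card ≤ 3 := by
  have inv : ∀ x, ∀ g ∈ E, ∀ y ∈ orbitFinset E x, g y ∈ orbitFinset E x :=
    fun x g hg y hy => apply_mem_orbitFinset hg hy
  have hle : ∀ Y : Finset α, (∀ g ∈ E, ∀ y ∈ Y, g y ∈ Y) → Y.card ≤ 4 → Y.card ≤ 3 :=
    fun Y h h' => card_le_three_of_invariant hE hcard hsmall h h'
  have htwo : ∀ x ∈ Z, (orbitFinset E x).card = 1 ∨ (orbitFinset E x).card = 2 := by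
    intro x hx
    have h3 := hle _ (inv x) (hZ x hx)
    obtain ⟨k, hk⟩ := exists_card_orbitFinset_eq_two_pow hE x
    rcases k with _ | _ | k
    · left; simpa using hk
    · right; simpa using hk
    · have : 1 ≤ 2 ^ k := Nat.one_le_two_pow
      rw [pow_succ, pow_succ] at hk
      omega
  by_contra hcon
  -- greedily add orbits of points of `Z` until the union has exactly four elements
  have step : ∀ Y : Finset α, (∀ g ∈ E, ∀ y ∈ Y, g y ∈ Y) → Y.card ≤ 3 →
      ∃ x ∈ Z, x ∉ Y ∧ (Y ∪ orbitFinset E x).card = Y.card + (orbitFinset E x).card := by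
    intro Y hY hY3
    obtain ⟨x, hxZ, hxY⟩ := Finset.exists_mem_notMem_of_card_lt_card (s := Y) (t := Z) (by omega)
    refine ⟨x, hxZ, hxY, Finset.card_union_of_disjoint ?_⟩
    rw [Finset.disjoint_right]
    intro w hw hwY
    apply hxY
    have : x ∈ orbitFinset E w := by
      rw [orbitFinset_eq_of_mem hw]
      exact self_mem_orbitFinset E x
    exact orbitFinset_subset hY hwY this
  have hinv : ∀ Y : Finset α, (∀ g ∈ E, ∀ y ∈ Y, g y ∈ Y) → ∀ x,
      ∀ g ∈ E, ∀ y ∈ Y ∪ orbitFinset E x, g y ∈ Y ∪ orbitFinset E x :=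
    fun Y hY x => union_invariant hY (inv x)
  by_cases htw : ∃ x ∈ Z, (orbitFinset E x).card = 2
  · obtain ⟨x, hx, hx2⟩ := htw
    have hone : ∀ y ∈ Z, y ∉ orbitFinset E x → (orbitFinset E y).card = 1 := by
      intro y hy hyx
      refine (htwo y hy).resolve_right fun hy2 => ?_
      have hu := Finset.card_union_of_disjoint (disjoint_orbitFinset hyx)
      have := hle _ (hinv _ (inv x) y) (by omega)
      omega
    obtain ⟨y, hy, hyx, hyc⟩ := step _ (inv x) (by omega)
    have hy1 := hone y hy hyx
    have invy := hinv _ (inv x) y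
    obtain ⟨w, hw, hwx, hwc⟩ := step _ invy (by omega)
    have hw1 := hone w hw fun h => hwx (Finset.mem_union_left _ h)
    have := hle _ (hinv _ invy w) (by omega)
    omega
  · have hone : ∀ y ∈ Z, (orbitFinset E y).card = 1 := fun y hy =>
      (htwo y hy).resolve_right fun h => htw ⟨y, hy, h⟩
    obtain ⟨Y, hYZ, hY4⟩ := Finset.exists_subset_card_eq (show 4 ≤ Z.card by omega)
    have := hle Y (fun g hg y hy => ?_) (by omega)
    · omega
    · obtain ⟨w, hw⟩ := Finset.card_eq_one.1 (hone y (hYZ hy))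
      have h1 := self_mem_orbitFinset E y
      have h2 := apply_mem_orbitFinset hg h1
      rw [hw, Finset.mem_singleton] at h1 h2
      rwa [h2, ← h1]

theorem pointwiseStabilizer_pointwiseStabilizer_compl {E : Subgroup (Perm α)} (O : Finset α) :
    pointwiseStabilizer (pointwiseStabilizer E O) Oᶜ = ⊥ := by
  refine (Subgroup.eq_bot_iff_forall _).2 fun g hg => Perm.ext fun y => ?_
  by_cases hy : y ∈ O
  · exact hg.1.2 y hy
  · exact hg.2 y (Finset.mem_compl.2 hy)

/-- A large elementary abelian `2`-group of permutations contains an element of small support,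
or has an orbit missing at most one point. -/
theorem exists_small_support_or_large_orbit {E : Subgroup (Perm α)} (hE : ∀ g ∈ E, g * g = 1)
    (h7 : 7 ≤ Fintype.card α) (hcard : 2 ^ Fintype.card α ≤ 8 * Nat.card E ^ 2) :
    (∃ g ∈ E, g ≠ 1 ∧ g.support.card ≤ 4) ∨
      ∃ x, Fintype.card α ≤ (orbitFinset E x).card + 1 := by
  by_contra! hcon
  obtain ⟨hs, hlarge⟩ := hcon
  have hsmall : ∀ g ∈ E, g.support.card ≤ 4 → g = 1 := by
    intro g hg h
    by_contra hne
    exact absurd (hs g hg hne) (by omega)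
  obtain ⟨x, hx⟩ : ∃ x, 4 < (orbitFinset E x).card := by
    by_contra! h
    have := card_short_orbits_le_three hE hcard hsmall (Z := Finset.univ) (fun x _ => h x)
    rw [Finset.card_univ] at this
    omega
  set O := orbitFinset E x with hO
  set E' := pointwiseStabilizer E O with hE'
  have hEE' : O.card * Nat.card E' = Nat.card E :=
    card_orbitFinset_mul_card_pointwiseStabilizer hE x
  have hinvO : ∀ g ∈ E, ∀ y ∈ Oᶜ, g y ∈ Oᶜ := by
    intro g hg y hy
    rw [Finset.mem_compl] at hy ⊢
    exact fun h => hy (by simpa using apply_mem_orbitFinset (inv_mem hg) h)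
  have hE'sq : ∀ g ∈ E', g * g = 1 := fun g hg => hE g hg.1
  have hbound := card_sq_le Oᶜ E' hE'sq (fun g hg => hinvO g hg.1)
  rw [pointwiseStabilizer_pointwiseStabilizer_compl, Subgroup.card_bot, one_pow, mul_one] at hbound
  have hcompl : O.card + Oᶜ.card = Fintype.card α := Finset.card_add_card_compl O
  obtain ⟨k, hk⟩ := exists_card_orbitFinset_eq_two_pow hE x
  rw [← hO] at hk
  rw [← hEE', ← hcompl, pow_add, mul_pow, ← mul_assoc] at hcard
  have hk3 : k = 3 := by
    have h1 : 2 ^ O.card * 2 ^ Oᶜ.card ≤ 8 * O.card ^ 2 * 2 ^ Oᶜ.card :=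
      hcard.trans (Nat.mul_le_mul_left _ hbound)
    have h2 := Nat.le_of_mul_le_mul_right h1 (by positivity)
    rw [hk] at h2
    have h3 : 2 ^ (2 ^ k) ≤ 2 ^ (2 * k + 3) := by
      calc 2 ^ (2 ^ k) ≤ 8 * (2 ^ k) ^ 2 := h2
        _ = 2 ^ (2 * k + 3) := by ring
    have h4 := (Nat.pow_le_pow_iff_right (by norm_num)).1 h3
    rcases k with _ | _ | _ | _ | k
    · simp at hk; omega
    · simp at hk; omega
    · norm_num at hk; omega
    · rfl
    · have := Nat.lt_two_pow_self (n := k)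
      rw [pow_succ, pow_succ, pow_succ, pow_succ] at h4
      omega
  have hO8 : O.card = 8 := by rw [hk, hk3]; norm_num
  rw [hO8] at hcard
  have hlow : 2 ^ Oᶜ.card ≤ 2 * Nat.card E' ^ 2 := by omega
  by_cases htriv : ∃ y g, g ∈ E' ∧ g y ≠ y
  · obtain ⟨y, g, hg, hgy⟩ := htriv
    set Q := orbitFinset E' y with hQ
    have hyQ : y ∈ Q := self_mem_orbitFinset E' y
    have hgQ : g y ∈ Q := apply_mem_orbitFinset hg hyQ
    have hQ2 : 1 < Q.card := Finset.one_lt_card.2 ⟨_, hgQ, _, hyQ, hgy⟩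
    have hyO : y ∉ O := fun h => hgy (hg.2 y h)
    have hQO : Q ⊆ Oᶜ := orbitFinset_subset (fun g hg => hinvO g hg.1) (Finset.mem_compl.2 hyO)
    have hsd : (Oᶜ \ Q).card + Q.card = Oᶜ.card := Finset.card_sdiff_add_card_eq_card hQO
    have hinvR : ∀ g ∈ E', ∀ w ∈ Oᶜ \ Q, g w ∈ Oᶜ \ Q := by
      intro g hg w hw
      rw [Finset.mem_sdiff] at hw ⊢
      exact ⟨hinvO g hg.1 w hw.1,
        fun h => hw.2 (by simpa using apply_mem_orbitFinset (inv_mem hg) h)⟩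
    obtain ⟨j, hj⟩ := exists_card_orbitFinset_eq_two_pow hE'sq y
    rw [← hQ] at hj
    have hQ4 : Q.card ≤ 4 := by
      have h1 := card_sq_le (Oᶜ \ Q) (pointwiseStabilizer E' Q) (fun g hg => hE'sq g hg.1)
        (fun g hg => hinvR g hg.1)
      have h2 : pointwiseStabilizer (pointwiseStabilizer E' Q) (Oᶜ \ Q) = ⊥ := by
        refine (Subgroup.eq_bot_iff_forall _).2 fun g hg => Perm.ext fun w => ?_
        by_cases hwO : w ∈ O
        · exact hg.1.1.2 w hwO
        by_cases hwQ : w ∈ Q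
        · exact hg.1.2 w hwQ
        · exact hg.2 w (Finset.mem_sdiff.2 ⟨Finset.mem_compl.2 hwO, hwQ⟩)
      rw [h2, Subgroup.card_bot, one_pow, mul_one] at h1
      rw [← card_orbitFinset_mul_card_pointwiseStabilizer hE'sq y, ← hQ, mul_pow, ← hsd, pow_add,
        mul_comm, ← mul_assoc] at hlow
      have h3 := Nat.le_of_mul_le_mul_right (hlow.trans (Nat.mul_le_mul_left _ h1)) (by positivity)
      rw [hj] at h3 ⊢
      have h4 : 2 ^ (2 ^ j) ≤ 2 ^ (2 * j + 1) := by
        calc 2 ^ (2 ^ j) ≤ 2 * (2 ^ j) ^ 2 := h3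
          _ = 2 ^ (2 * j + 1) := by ring
      have h5 := (Nat.pow_le_pow_iff_right (by norm_num)).1 h4
      rcases j with _ | _ | _ | j
      · norm_num
      · norm_num
      · norm_num
      · have := Nat.lt_two_pow_self (n := j)
        rw [pow_succ, pow_succ, pow_succ] at h5
        omega
    have h1 := card_sq_le (Oᶜ \ Q) E' hE'sq hinvR
    have h2 : pointwiseStabilizer E' (Oᶜ \ Q) = ⊥ := by
      refine (Subgroup.eq_bot_iff_forall _).2 fun g hg =>
        eq_one_of_mem_pointwiseStabilizer_compl hsmall hQ4 ⟨hg.1.1, fun w hw => ?_⟩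
      by_cases hwO : w ∈ O
      · exact hg.1.2 w hwO
      · exact hg.2 w (Finset.mem_sdiff.2 ⟨Finset.mem_compl.2 hwO, Finset.mem_compl.1 hw⟩)
    rw [h2, Subgroup.card_bot, one_pow, mul_one] at h1
    rw [← hsd, pow_add, mul_comm] at hlow
    have h3 := Nat.le_of_mul_le_mul_right (hlow.trans (Nat.mul_le_mul_left _ h1)) (by positivity)
    have h4 : 2 ^ 2 ≤ 2 ^ Q.card := Nat.pow_le_pow_right two_pos hQ2
    omega
  · push Not at htriv
    have hbot : E' = ⊥ := (Subgroup.eq_bot_iff_forall _).2 fun g hg => Perm.ext fun y =>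
      htriv y g hg
    rw [hbot, Subgroup.card_bot] at hlow
    have h1 : Oᶜ.card ≤ 1 := by
      by_contra h
      have : 2 ^ 2 ≤ 2 ^ Oᶜ.card := Nat.pow_le_pow_right two_pos (by omega)
      omega
    have := hlarge x
    rw [← hO] at this
    omega

end ElementaryAbelian

/-- A permutation group is primitive when its only invariant equivalence relations are equality
and the total relation. -/
def IsPrimitivePermGroup {α : Type*} (P : Subgroup (Perm α)) : Prop :=
  ∀ s : Setoid α, (∀ p ∈ P, ∀ x y, s x y → s (p x) (p y)) →
    (∀ x y, s x y → x = y) ∨ ∀ x y, s x y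

/-- A code invariant under a permutation group of the coordinates. -/
def IsInvariantCode {α : Type*} (P : Subgroup (Perm α)) (W : AddSubgroup (α → ZMod 2)) : Prop :=
  ∀ p ∈ P, ∀ w ∈ W, (fun x => w (p x)) ∈ W

section Codes

variable {α : Type*} [Fintype α] [DecidableEq α] {P : Subgroup (Perm α)}

/-- The indicator vector of a finset over the field with two elements. -/
def indicatorVec (t : Finset α) : α → ZMod 2 := fun x => if x ∈ t then 1 else 0

theorem indicatorVec_comp (t : Finset α) (p : Perm α) :
    (fun x => indicatorVec t (p x)) = indicatorVec (t.map p⁻¹.toEmbedding) := by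
  funext x
  have : x ∈ t.map p⁻¹.toEmbedding ↔ p x ∈ t := by
    simp only [Finset.mem_map, Equiv.coe_toEmbedding]
    exact ⟨by rintro ⟨y, hy, rfl⟩; simpa using hy, fun h => ⟨p x, h, by simp⟩⟩
  simp only [indicatorVec, this]

theorem indicatorVec_add (s t : Finset α) :
    indicatorVec s + indicatorVec t = indicatorVec (symmDiff s t) := by
  funext x
  by_cases hs : x ∈ s <;> by_cases ht : x ∈ t <;>
    simp [indicatorVec, Finset.mem_symmDiff, hs, ht]
  decide

theorem zmod_two_eq (a : ZMod 2) : a = 0 ∨ a = 1 := by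
  revert a
  decide

theorem indicatorVec_surjective (w : α → ZMod 2) : ∃ t : Finset α, indicatorVec t = w := by
  refine ⟨Finset.univ.filter fun x => w x = 1, funext fun x => ?_⟩
  rcases zmod_two_eq (w x) with h | h <;> simp [indicatorVec, h]

theorem indicatorVec_univ : indicatorVec (Finset.univ : Finset α) = 1 := by
  funext x
  simp [indicatorVec]

theorem indicatorVec_pair_mem (hP : IsPrimitivePermGroup P) {W : AddSubgroup (α → ZMod 2)}
    (hW : IsInvariantCode P W) {a c : α} (hac : a ≠ c)
    (h : indicatorVec {a} + indicatorVec {c} ∈ W) (x y : α) :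
    indicatorVec {x} + indicatorVec {y} ∈ W := by
  have hself : ∀ v : α → ZMod 2, v + v = 0 := fun v => funext fun x => CharTwo.add_self_eq_zero _
  let s : Setoid α :=
    { r := fun x y => indicatorVec {x} + indicatorVec {y} ∈ W
      iseqv := ⟨fun x => by rw [hself]; exact W.zero_mem,
        fun {x y} h => by rwa [add_comm],
        fun {x y w} h h' => by
          have := W.add_mem h h'
          rwa [add_assoc, ← add_assoc (indicatorVec {y}), hself, zero_add] at this⟩ }
  have hinv : ∀ p ∈ P, ∀ x y, s x y → s (p x) (p y) := by
    intro p hp x y hxy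
    have := hW p⁻¹ (inv_mem hp) _ hxy
    have e : ∀ x, (fun y => indicatorVec {x} (p⁻¹ y)) = indicatorVec {p x} := by
      intro x
      rw [indicatorVec_comp]
      simp
    change (fun z => indicatorVec {x} (p⁻¹ z)) + (fun z => indicatorVec {y} (p⁻¹ z)) ∈ W at this
    rwa [e, e] at this
  rcases hP s hinv with ht | ht
  · exact absurd (ht a c h) hac
  · exact ht x y

theorem le_of_indicatorVec_pair_mem {W V : AddSubgroup (α → ZMod 2)} (hWV : W ≤ V)
    (h1 : (1 : α → ZMod 2) ∉ V)
    (hpair : ∀ x y, indicatorVec {x} + indicatorVec {y} ∈ W) : V ≤ W := by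
  have key : ∀ (a : α) (t : Finset α), indicatorVec t ∈ W ∨ indicatorVec t + indicatorVec {a} ∈ W := by
    intro a t
    induction t using Finset.induction_on with
    | empty =>
      left
      exact W.zero_mem
    | insert x t hx ih =>
      have e : indicatorVec (insert x t) = indicatorVec t + indicatorVec {x} := by
        rw [indicatorVec_add]
        congr 1
        ext y
        simp only [Finset.mem_insert, Finset.mem_symmDiff, Finset.mem_singleton]
        grind
      have hself : indicatorVec {a} + indicatorVec {a} = (0 : α → ZMod 2) :=
        funext fun x => CharTwo.add_self_eq_zero _
      rcases ih with ih | ih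
      · right
        rw [e, add_assoc]
        exact W.add_mem ih (hpair x a)
      · left
        have := W.add_mem ih (hpair a x)
        rw [add_assoc, ← add_assoc (indicatorVec {a}), hself, zero_add] at this
        rwa [e]
  intro v hv
  by_contra hvW
  apply h1
  obtain ⟨t, rfl⟩ := indicatorVec_surjective v
  have hsing : ∀ a, indicatorVec {a} ∈ V := by
    intro a
    have := (key a t).resolve_left hvW
    exact (V.add_mem_cancel_left hv).1 (hWV this)
  have hall : ∀ t : Finset α, indicatorVec t ∈ V := by
    intro t
    by_cases hne : Nonempty α
    · obtain ⟨a⟩ := hne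
      rcases key a t with h | h
      · exact hWV h
      · exact (V.add_mem_cancel_right (hsing a)).1 (hWV h)
    · convert V.zero_mem
      funext x
      exact (hne ⟨x⟩).elim
  rw [← indicatorVec_univ]
  exact hall _

theorem exists_separating_codeword (hP : IsPrimitivePermGroup P) {W : AddSubgroup (α → ZMod 2)}
    (hW : IsInvariantCode P W) (h1 : (1 : α → ZMod 2) ∉ W) (hne : W ≠ ⊥) {x y : α} (hxy : x ≠ y) :
    ∃ w ∈ W, w x ≠ w y := by
  by_contra! hcon
  let s : Setoid α :=
    { r := fun x y => ∀ w ∈ W, w x = w y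
      iseqv := ⟨fun x w _ => rfl, fun h w hw => (h w hw).symm,
        fun h h' w hw => (h w hw).trans (h' w hw)⟩ }
  rcases hP s (fun p hp x y hxy w hw => hxy _ (hW p hp w hw)) with ht | ht
  · exact hxy (ht x y hcon)
  · apply hne
    rw [AddSubgroup.eq_bot_iff_forall]
    intro w hw
    rcases zmod_two_eq (w x) with h | h
    · exact funext fun y => (ht y x w hw).trans h
    · exact absurd (show w = 1 from funext fun y => (ht y x w hw).trans h) fun e => h1 (e ▸ hw)

/-- A tetrad of a code is a four-element set whose indicator vector is a codeword. -/
def IsTetrad (T : AddSubgroup (α → ZMod 2)) (t : Finset α) : Prop :=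
  t.card = 4 ∧ indicatorVec t ∈ T

section Tetrads

variable {T : AddSubgroup (α → ZMod 2)}

theorem IsTetrad.map {t : Finset α} (ht : IsTetrad T t) (hT : IsInvariantCode P T) {p : Perm α}
    (hp : p ∈ P) : IsTetrad T (t.map p.toEmbedding) := by
  refine ⟨by rw [Finset.card_map, ht.1], ?_⟩
  have := hT p⁻¹ (inv_mem hp) _ ht.2
  rwa [indicatorVec_comp, inv_inv] at this

theorem sum_mul_indicatorVec (w : α → ZMod 2) (t : Finset α) :
    ∑ i, w i * indicatorVec t i = ∑ i ∈ t, w i := by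
  simp [indicatorVec, Finset.sum_ite_mem]

theorem IsTetrad.card_inter_eq_two {s t : Finset α} (hs : IsTetrad T s) (ht : IsTetrad T t)
    (hT : ∀ v ∈ T, ∀ w ∈ T, ∑ i, v i * w i = 0) {x : α} (hxs : x ∈ s) (hxt : x ∈ t)
    (hst : s ≠ t) : (s ∩ t).card = 2 := by
  have h1 := hT _ hs.2 _ ht.2
  rw [sum_mul_indicatorVec] at h1
  have h2 : ((t ∩ s).card : ZMod 2) = 0 := by
    rw [← h1]
    simp [indicatorVec, Finset.sum_ite_mem]
  rw [ZMod.natCast_eq_zero_iff_even, Finset.inter_comm] at h2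
  have h3 : 0 < (s ∩ t).card := Finset.card_pos.2 ⟨x, Finset.mem_inter.2 ⟨hxs, hxt⟩⟩
  have h4 : (s ∩ t).card < 4 := by
    rw [← hs.1]
    refine Finset.card_lt_card ⟨Finset.inter_subset_left, fun h => hst ?_⟩
    exact Finset.eq_of_subset_of_card_le (fun y hy => (Finset.mem_inter.1 (h hy)).2)
      (by rw [hs.1, ht.1])
  obtain ⟨k, hk⟩ := h2
  omega

theorem IsTetrad.add {s t : Finset α} (hs : IsTetrad T s) (ht : IsTetrad T t)
    (hT : ∀ v ∈ T, ∀ w ∈ T, ∑ i, v i * w i = 0) {x : α} (hxs : x ∈ s) (hxt : x ∈ t)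
    (hst : s ≠ t) : IsTetrad T (symmDiff s t) := by
  refine ⟨?_, indicatorVec_add s t ▸ T.add_mem hs.2 ht.2⟩
  have h := hs.card_inter_eq_two ht hT hxs hxt hst
  have h1 := Finset.card_sdiff_add_card_inter s t
  have h2 := Finset.card_sdiff_add_card_inter t s
  rw [Finset.inter_comm] at h2
  rw [symmDiff, Finset.sup_eq_union, Finset.card_union_of_disjoint disjoint_sdiff_sdiff]
  have := hs.1
  have := ht.1
  omega

theorem exists_tetrad_mem_mem (hP : IsPrimitivePermGroup P) (hTP : IsInvariantCode P T)
    (hT : ∀ v ∈ T, ∀ w ∈ T, ∑ i, v i * w i = 0) {t₀ : Finset α} (ht₀ : IsTetrad T t₀)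
    {x y : α} (hxy : x ≠ y) : ∃ t, IsTetrad T t ∧ x ∈ t ∧ y ∈ t := by
  let s : Setoid α :=
    { r := fun x y => x = y ∨ ∃ t, IsTetrad T t ∧ x ∈ t ∧ y ∈ t
      iseqv := ⟨fun x => Or.inl rfl, ?_, ?_⟩ }
  rotate_left
  · rintro x y (h | ⟨t, ht, h, h'⟩)
    · exact Or.inl h.symm
    · exact Or.inr ⟨t, ht, h', h⟩
  · rintro x y w (rfl | ⟨t, ht, hx, hy⟩)
    · exact id
    rintro (rfl | ⟨t', ht', hy', hw⟩)
    · exact Or.inr ⟨t, ht, hx, hy⟩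
    right
    by_cases hwt : w ∈ t
    · exact ⟨t, ht, hx, hwt⟩
    by_cases hxt : x ∈ t'
    · exact ⟨t', ht', hxt, hw⟩
    exact ⟨_, ht.add ht' hT hy hy' (fun e => hwt (e ▸ hw)),
      Finset.mem_symmDiff.2 (Or.inl ⟨hx, hxt⟩), Finset.mem_symmDiff.2 (Or.inr ⟨hw, hwt⟩)⟩
  have hinv : ∀ p ∈ P, ∀ x y, s x y → s (p x) (p y) := by
    rintro p hp x y (rfl | ⟨t, ht, hx, hy⟩)
    · exact Or.inl rfl
    · exact Or.inr ⟨_, ht.map hTP hp, Finset.mem_map_of_mem _ hx, Finset.mem_map_of_mem _ hy⟩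
  rcases hP s hinv with h | h
  · obtain ⟨a, ha, c, hc, hac⟩ := Finset.one_lt_card.1 (show 1 < t₀.card by rw [ht₀.1]; norm_num)
    exact absurd (h a c (Or.inr ⟨t₀, ht₀, ha, hc⟩)) hac
  · exact (h x y).resolve_left hxy

theorem exists_tetrad_mem_notMem (hP : IsPrimitivePermGroup P) (hTP : IsInvariantCode P T)
    (h7 : 7 ≤ Fintype.card α)
    (hT : ∀ v ∈ T, ∀ w ∈ T, ∑ i, v i * w i = 0) {t₀ : Finset α} (ht₀ : IsTetrad T t₀)
    {x y : α} (hxy : x ≠ y) : ∃ t, IsTetrad T t ∧ x ∈ t ∧ y ∉ t := by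
  let s : Setoid α :=
    { r := fun x y => ∀ t, IsTetrad T t → (x ∈ t ↔ y ∈ t)
      iseqv := ⟨fun x t _ => Iff.rfl, fun h t ht => (h t ht).symm,
        fun h h' t ht => (h t ht).trans (h' t ht)⟩ }
  have hinv : ∀ p ∈ P, ∀ x y, s x y → s (p x) (p y) := by
    intro p hp x y h t ht
    have := h _ (ht.map hTP (inv_mem hp))
    have e : ∀ x, x ∈ t.map p⁻¹.toEmbedding ↔ p x ∈ t := by
      intro x
      simp only [Finset.mem_map, Equiv.coe_toEmbedding]
      exact ⟨by rintro ⟨y, hy, rfl⟩; simpa using hy, fun h => ⟨p x, h, by simp⟩⟩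
    rwa [e, e] at this
  rcases hP s hinv with h | h
  · have : ¬ s x y := fun h' => hxy (h x y h')
    have : ∃ t, IsTetrad T t ∧ ¬ (x ∈ t ↔ y ∈ t) := by
      by_contra! hcon
      exact this hcon
    obtain ⟨t, ht, hxyt⟩ := this
    by_cases hx : x ∈ t
    · exact ⟨t, ht, hx, fun hy => hxyt (by simp [hx, hy])⟩
    · have hy : y ∈ t := by
        by_contra hy
        exact hxyt (by simp [hx, hy])
      obtain ⟨q, hq, hxq, hyq⟩ := exists_tetrad_mem_mem hP hTP hT ht₀ hxy
      refine ⟨_, hq.add ht hT hyq hy (fun e => hx (e ▸ hxq)),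
        Finset.mem_symmDiff.2 (Or.inl ⟨hxq, hx⟩), fun h => ?_⟩
      rcases Finset.mem_symmDiff.1 h with h | h
      · exact h.2 hy
      · exact h.2 hyq
  · obtain ⟨a, ha⟩ := Finset.card_pos.1 (show 0 < t₀.card by rw [ht₀.1]; norm_num)
    obtain ⟨c, hc⟩ : ∃ c, c ∉ t₀ := by
      by_contra! hcon
      have := Finset.card_le_card (fun c _ => hcon c : Finset.univ ⊆ t₀)
      rw [Finset.card_univ, ht₀.1] at this
      omega
    exact absurd ((h a c t₀ ht₀).1 ha) hc

theorem exists_eq_pair_of_card_eq_two {s : Finset α} {x : α} (hs : s.card = 2) (hx : x ∈ s) :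
    ∃ y, y ≠ x ∧ s = {x, y} := by
  obtain ⟨a, c, hac, rfl⟩ := Finset.card_eq_two.1 hs
  rcases Finset.mem_insert.1 hx with rfl | h
  · exact ⟨c, hac.symm, rfl⟩
  · rw [Finset.mem_singleton] at h
    exact ⟨a, h ▸ hac, by rw [h, Finset.pair_comm]⟩

theorem exists_eq_insert_of_card_eq_four {s : Finset α} (hs : s.card = 4) {a c d : α}
    (ha : a ∈ s) (hc : c ∈ s) (hd : d ∈ s) (hac : a ≠ c) (had : a ≠ d) (hcd : c ≠ d) :
    ∃ e, e ≠ a ∧ e ≠ c ∧ e ≠ d ∧ s = {a, c, d, e} := by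
  have hsub : ({a, c, d} : Finset α) ⊆ s := by
    intro y hy
    simp only [Finset.mem_insert, Finset.mem_singleton] at hy
    rcases hy with rfl | rfl | rfl <;> assumption
  have h3 : ({a, c, d} : Finset α).card = 3 := Finset.card_eq_three.2 ⟨a, c, d, hac, had, hcd, rfl⟩
  have hcard : (s \ {a, c, d}).card = 1 := by
    rw [Finset.card_sdiff_of_subset hsub, hs, h3]
  obtain ⟨e, he⟩ := Finset.card_eq_one.1 hcard
  have hmem : ∀ y, (y ∈ s ∧ y ∉ ({a, c, d} : Finset α)) ↔ y = e := by
    intro y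
    rw [← Finset.mem_sdiff, he, Finset.mem_singleton]
  have hee := (hmem e).2 rfl
  simp only [Finset.mem_insert, Finset.mem_singleton, not_or] at hee
  refine ⟨e, hee.2.1, hee.2.2.1, hee.2.2.2, Finset.ext fun y => ?_⟩
  have := hmem y
  simp only [Finset.mem_insert, Finset.mem_singleton] at this ⊢
  grind

theorem seven_point_identities {w₀ w₁ w₂ w₃ w₄ w₅ w₆ : ZMod 2} (e₁ : w₀ + (w₁ + (w₂ + w₃)) = 0)
    (e₂ : w₀ + (w₁ + (w₄ + w₅)) = 0) (e₃ : w₀ + (w₂ + (w₄ + w₆)) = 0) :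
    w₀ = w₁ + w₅ + (w₁ + w₃) + (w₁ + w₃ + w₅ + w₆) + (w₁ + w₃ + w₅) ∧
    w₁ = w₁ + w₅ + (w₁ + w₃) + (w₁ + w₃ + w₅) ∧
    w₂ = w₁ + w₅ + (w₁ + w₃ + w₅ + w₆) + (w₁ + w₃ + w₅) ∧
    w₃ = w₁ + w₅ + (w₁ + w₃ + w₅) ∧
    w₄ = w₁ + w₃ + (w₁ + w₃ + w₅ + w₆) + (w₁ + w₃ + w₅) ∧
    w₅ = w₁ + w₃ + (w₁ + w₃ + w₅) ∧
    w₆ = w₁ + w₃ + w₅ + w₆ + (w₁ + w₃ + w₅) := by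
  decide +revert

set_option maxHeartbeats 1000000 in
/-- A self-orthogonal code with a tetrad and without words of weight two, invariant under a
primitive group, is of index two in its dual unless it contains the all-one word. -/
theorem mem_or_add_one_mem_of_orthogonal (hP : IsPrimitivePermGroup P) (hTP : IsInvariantCode P T)
    (h7 : 7 ≤ Fintype.card α) (hT : ∀ v ∈ T, ∀ w ∈ T, ∑ i, v i * w i = 0)
    {t₀ : Finset α} (ht₀ : IsTetrad T t₀) (h1 : (1 : α → ZMod 2) ∉ T)
    (hpair : ∀ x y : α, x ≠ y → indicatorVec {x} + indicatorVec {y} ∉ T)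
    {w : α → ZMod 2} (hw : ∀ v ∈ T, ∑ i, w i * v i = 0) : w ∈ T ∨ w + 1 ∈ T := by
  obtain ⟨x, hx0, a, ha0, hxa⟩ :=
    Finset.one_lt_card.1 (show 1 < t₀.card by rw [ht₀.1]; norm_num)
  obtain ⟨t₂, ht₂, hx2, ha2⟩ := exists_tetrad_mem_notMem hP hTP h7 hT ht₀ hxa
  obtain ⟨b₁, hb1x, h12⟩ := exists_eq_pair_of_card_eq_two
    (ht₀.card_inter_eq_two ht₂ hT hx0 hx2 (fun e => ha2 (e ▸ ha0))) (Finset.mem_inter.2 ⟨hx0, hx2⟩)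
  have hb1 : b₁ ∈ t₀ ∩ t₂ := by rw [h12]; simp
  rw [Finset.mem_inter] at hb1
  obtain ⟨t₃, ht₃, hx3, hb13⟩ := exists_tetrad_mem_notMem hP hTP h7 hT ht₀ hb1x.symm
  obtain ⟨b₂, hb2x, h13⟩ := exists_eq_pair_of_card_eq_two
    (ht₀.card_inter_eq_two ht₃ hT hx0 hx3 (fun e => hb13 (e ▸ hb1.1)))
    (Finset.mem_inter.2 ⟨hx0, hx3⟩)
  obtain ⟨b₄, hb4x, h23⟩ := exists_eq_pair_of_card_eq_two
    (ht₂.card_inter_eq_two ht₃ hT hx2 hx3 (fun e => hb13 (e ▸ hb1.2)))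
    (Finset.mem_inter.2 ⟨hx2, hx3⟩)
  have hb2 : b₂ ∈ t₀ ∩ t₃ := by rw [h13]; simp
  have hb4 : b₄ ∈ t₂ ∩ t₃ := by rw [h23]; simp
  rw [Finset.mem_inter] at hb2 hb4
  have hb21 : b₂ ≠ b₁ := fun e => hb13 (e ▸ hb2.2)
  have hb41 : b₄ ≠ b₁ := fun e => hb13 (e ▸ hb4.2)
  have m12 : ∀ y, y ∈ t₀ → y ∈ t₂ → y = x ∨ y = b₁ := fun y hy hy' => by
    have : y ∈ t₀ ∩ t₂ := Finset.mem_inter.2 ⟨hy, hy'⟩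
    simpa [h12] using this
  have m13 : ∀ y, y ∈ t₀ → y ∈ t₃ → y = x ∨ y = b₂ := fun y hy hy' => by
    have : y ∈ t₀ ∩ t₃ := Finset.mem_inter.2 ⟨hy, hy'⟩
    simpa [h13] using this
  have m23 : ∀ y, y ∈ t₂ → y ∈ t₃ → y = x ∨ y = b₄ := fun y hy hy' => by
    have : y ∈ t₂ ∩ t₃ := Finset.mem_inter.2 ⟨hy, hy'⟩
    simpa [h23] using this
  have hb24 : b₂ ≠ b₄ := fun e => by
    rcases m12 b₂ hb2.1 (e ▸ hb4.1) with h | h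
    · exact hb2x h
    · exact hb21 h
  obtain ⟨b₃, hb3x, hb31, hb32, et1⟩ := exists_eq_insert_of_card_eq_four ht₀.1 hx0 hb1.1 hb2.1
    hb1x.symm hb2x.symm hb21.symm
  obtain ⟨b₅, hb5x, hb51, hb54, et2⟩ := exists_eq_insert_of_card_eq_four ht₂.1 hx2 hb1.2 hb4.1
    hb1x.symm hb4x.symm hb41.symm
  obtain ⟨b₆, hb6x, hb62, hb64, et3⟩ := exists_eq_insert_of_card_eq_four ht₃.1 hx3 hb2.2 hb4.2
    hb2x.symm hb4x.symm hb24
  have hb3 : b₃ ∈ t₀ := by rw [et1]; simp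
  have hb5 : b₅ ∈ t₂ := by rw [et2]; simp
  have hb6 : b₆ ∈ t₃ := by rw [et3]; simp
  have hb3t2 : b₃ ∉ t₂ := fun h => (m12 _ hb3 h).elim hb3x hb31
  have hb3t3 : b₃ ∉ t₃ := fun h => (m13 _ hb3 h).elim hb3x hb32
  have hb5t1 : b₅ ∉ t₀ := fun h => (m12 _ h hb5).elim hb5x hb51
  have hb5t3 : b₅ ∉ t₃ := fun h => (m23 _ hb5 h).elim hb5x hb54
  have hb6t1 : b₆ ∉ t₀ := fun h => (m13 _ h hb6).elim hb6x hb62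
  have hb6t2 : b₆ ∉ t₂ := fun h => (m23 _ h hb6).elim hb6x hb64
  have hb2t2 : b₂ ∉ t₂ := fun h => (m12 _ hb2.1 h).elim hb2x hb21
  have hb4t1 : b₄ ∉ t₀ := fun h => (m12 _ h hb4.1).elim hb4x hb41
  -- adding any further point to the seven points gives a codeword of weight eight
  have height : ∀ y, y ∉ t₀ ∪ t₂ ∪ t₃ → indicatorVec (insert y (t₀ ∪ t₂ ∪ t₃)) ∈ T := by
    intro y hy
    simp only [Finset.mem_union, not_or] at hy
    obtain ⟨⟨hy1, hy2⟩, hy3⟩ := hy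
    have hxy : x ≠ y := fun e => hy1 (e ▸ hx0)
    obtain ⟨q, hq, hxq, hyq⟩ := exists_tetrad_mem_mem hP hTP hT ht₀ hxy
    obtain ⟨z, hzx, hz⟩ := exists_eq_pair_of_card_eq_two
      (hq.card_inter_eq_two ht₀ hT hxq hx0 (fun e => hy1 (e ▸ hyq)))
      (Finset.mem_inter.2 ⟨hxq, hx0⟩)
    have hzq : z ∈ q ∩ t₀ := by rw [hz]; simp
    rw [Finset.mem_inter] at hzq
    have hyz : y ≠ z := fun e => hy1 (e ▸ hzq.2)
    obtain ⟨v, hvx, hvy, hvz, eq⟩ := exists_eq_insert_of_card_eq_four hq.1 hxq hyq hzq.1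
      hxy hzx.symm hyz
    have hvq : v ∈ q := by rw [eq]; simp
    have hmeet : ∀ t, IsTetrad T t → x ∈ t → y ∉ t → (v ∈ t ↔ z ∉ t) := by
      intro t ht hxt hyt
      obtain ⟨z', hz'x, hz'⟩ := exists_eq_pair_of_card_eq_two
        (hq.card_inter_eq_two ht hT hxq hxt (fun e => hyt (e ▸ hyq)))
        (Finset.mem_inter.2 ⟨hxq, hxt⟩)
      have key : ∀ i, i ∈ q ∩ t ↔ i = x ∨ i = z' := fun i => by rw [hz']; simp
      have k1 := key v
      have k2 := key z
      have k3 := key z'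
      simp only [Finset.mem_inter, eq, Finset.mem_insert, Finset.mem_singleton] at k1 k2 k3
      grind
    have n1 := hmeet t₀ ht₀ hx0 hy1
    have n2 := hmeet t₂ ht₂ hx2 hy2
    have n3 := hmeet t₃ ht₃ hx3 hy3
    by_cases c2 : z ∈ t₂
    · have hz1 : z = b₁ := (m12 z hzq.2 c2).resolve_left hzx
      have hv3 : v ∈ t₃ := n3.2 (hz1 ▸ hb13)
      have hv6 : v = b₆ := by grind
      convert T.add_mem (T.add_mem hq.2 ht₀.2) ht₂.2 using 1
      rw [indicatorVec_add, indicatorVec_add]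
      congr 1
      ext i
      simp only [Finset.mem_symmDiff, Finset.mem_insert, Finset.mem_union, eq, et1, et2, et3,
        Finset.mem_singleton] at *
      grind
    · by_cases c3 : z ∈ t₃
      · have hz2 : z = b₂ := (m13 z hzq.2 c3).resolve_left hzx
        have hv5 : v = b₅ := by grind
        convert T.add_mem (T.add_mem hq.2 ht₀.2) ht₃.2 using 1
        rw [indicatorVec_add, indicatorVec_add]
        congr 1
        ext i
        simp only [Finset.mem_symmDiff, Finset.mem_insert, Finset.mem_union, eq, et1, et2, et3,
          Finset.mem_singleton] at *
        grind
      · have hv4 : v = b₄ := (m23 v (n2.2 c2) (n3.2 c3)).resolve_left hvx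
        have hz3 : z = b₃ := by grind
        convert T.add_mem (T.add_mem hq.2 ht₂.2) ht₃.2 using 1
        rw [indicatorVec_add, indicatorVec_add]
        congr 1
        ext i
        simp only [Finset.mem_symmDiff, Finset.mem_insert, Finset.mem_union, eq, et1, et2, et3,
          Finset.mem_singleton] at *
        grind
  have huniv : ∀ y, y ∈ t₀ ∪ t₂ ∪ t₃ := by
    by_contra! hcon
    obtain ⟨y, hy⟩ := hcon
    by_cases hy' : ∃ z, z ∉ insert y (t₀ ∪ t₂ ∪ t₃)
    · obtain ⟨z, hz⟩ := hy'
      have hzy : z ≠ y := fun e => hz (by simp [e])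
      have hz' : z ∉ t₀ ∪ t₂ ∪ t₃ := fun h => hz (Finset.mem_insert_of_mem h)
      apply hpair z y hzy
      have := T.add_mem (height z hz') (height y hy)
      rw [indicatorVec_add] at this ⊢
      convert this using 2
      ext u
      simp only [Finset.mem_symmDiff, Finset.mem_insert, Finset.mem_singleton]
      grind
    · push Not at hy'
      have := height y hy
      rw [Finset.eq_univ_iff_forall.2 hy', indicatorVec_univ] at this
      exact h1 this
  have hsmul : ∀ (c : ZMod 2) (v : α → ZMod 2), v ∈ T → (fun i => c * v i) ∈ T := by
    intro c v hv
    rcases zmod_two_eq c with rfl | rfl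
    · have e : (fun i => (0 : ZMod 2) * v i) = 0 := funext fun i => zero_mul _
      exact e ▸ T.zero_mem
    · simpa using hv
  have e1 := hw _ ht₀.2
  have e2 := hw _ ht₂.2
  have e3 := hw _ ht₃.2
  have hsum : ∀ {p q u v : α}, p ≠ q → p ≠ u → p ≠ v → q ≠ u → q ≠ v → u ≠ v →
      ∑ i ∈ {p, q, u, v}, w i = w p + (w q + (w u + w v)) := by
    intro p q u v h1 h2 h3 h4 h5 h6
    rw [Finset.sum_insert (by simp [h1, h2, h3]), Finset.sum_insert (by simp [h4, h5]),
      Finset.sum_pair h6]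
  rw [sum_mul_indicatorVec, et1, hsum hb1x.symm hb2x.symm hb3x.symm hb21.symm hb31.symm
    hb32.symm] at e1
  rw [sum_mul_indicatorVec, et2, hsum hb1x.symm hb4x.symm hb5x.symm hb41.symm hb51.symm
    hb54.symm] at e2
  rw [sum_mul_indicatorVec, et3, hsum hb2x.symm hb4x.symm hb6x.symm hb24 hb62.symm
    hb64.symm] at e3
  have hv := T.add_mem (T.add_mem (hsmul (w b₁ + w b₅) _ ht₀.2) (hsmul (w b₁ + w b₃) _ ht₂.2))
    (hsmul (w b₁ + w b₃ + w b₅ + w b₆) _ ht₃.2)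
  have hdecomp : ∀ i, w i = (w b₁ + w b₅) * indicatorVec t₀ i + (w b₁ + w b₃) * indicatorVec t₂ i +
      (w b₁ + w b₃ + w b₅ + w b₆) * indicatorVec t₃ i + (w b₁ + w b₃ + w b₅) := by
    intro i
    have hi := huniv i
    simp only [et1, et2, et3, Finset.mem_union, Finset.mem_insert, Finset.mem_singleton] at hi
    have hi' : i = x ∨ i = b₁ ∨ i = b₂ ∨ i = b₃ ∨ i = b₄ ∨ i = b₅ ∨ i = b₆ := by tauto
    obtain ⟨f0, f1, f2, f3, f4, f5, f6⟩ := seven_point_identities e1 e2 e3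
    rcases hi' with rfl | rfl | rfl | rfl | rfl | rfl | rfl <;>
      simpa only [indicatorVec, hx0, hx2, hx3, hb1.1, hb1.2, hb13, hb2.1, hb2t2, hb2.2, hb3, hb3t2,
        hb3t3, hb4t1, hb4.1, hb4.2, hb5t1, hb5, hb5t3, hb6t1, hb6t2, hb6, if_true, if_false,
        mul_one, mul_zero, add_zero, zero_add]
  rcases zmod_two_eq (w b₁ + w b₃ + w b₅) with h0 | h0
  · left
    convert hv using 1
    funext i
    rw [hdecomp i, h0]
    simp [Pi.add_apply]
  · right
    convert hv using 1
    funext i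
    rw [Pi.add_apply, hdecomp i, h0, add_assoc, Pi.one_apply, CharTwo.add_self_eq_zero, add_zero]
    rfl

end Tetrads

end Codes

section Comparability

variable {α : Type*} [Fintype α] [DecidableEq α] {P : Subgroup (Perm α)}

theorem exists_fixed_codeword {E : Subgroup (Perm α)} (hE : ∀ g ∈ E, g * g = 1)
    {W : AddSubgroup (α → ZMod 2)} (hW : IsInvariantCode E W) (hne : W ≠ ⊥) :
    ∃ w ∈ W, w ≠ 0 ∧ ∀ e ∈ E, ∀ x, w (e x) = w x := by
  obtain ⟨⟨w₀, hw₀⟩, hw₀'⟩ := AddSubgroup.ne_bot_iff_exists_ne_zero.1 hne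
  obtain ⟨w, ⟨hw, hw0⟩, hmax⟩ := Set.exists_max_image {w : α → ZMod 2 | w ∈ W ∧ w ≠ 0}
    (fun w => {e : Perm α | e ∈ E ∧ ∀ x, w (e x) = w x}.ncard) (Set.toFinite _) ⟨w₀, hw₀, fun h => hw₀' (Subtype.ext h)⟩
  refine ⟨w, hw, hw0, ?_⟩
  by_contra! hcon
  obtain ⟨e, he, y, hy⟩ := hcon
  have hv := hmax (w + fun x => w (e x)) ⟨W.add_mem hw (hW e he w hw), fun h => hy ?_⟩
  · refine hv.not_gt (Set.ncard_lt_ncard ⟨?_, fun h => ?_⟩ (Set.toFinite _))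
    · rintro g ⟨hg, hg'⟩
      refine ⟨hg, fun x => ?_⟩
      simp only [Pi.add_apply]
      rw [hg', ← Perm.mul_apply e g, mul_comm_of_sq_eq_one hE he hg, Perm.mul_apply, hg']
    · refine hy ((h (⟨he, fun x => ?_⟩ : e ∈ {g : Perm α | g ∈ E ∧ _})).2 y)
      simp only [Pi.add_apply]
      rw [← Perm.mul_apply e e, hE e he, Perm.one_apply, add_comm]
  · have := congrFun h y
    simp only [Pi.add_apply, Pi.zero_apply] at this
    exact (CharTwo.add_eq_zero.1 this).symm

theorem IsPrimitivePermGroup.exists_apply_ne (hP : IsPrimitivePermGroup P)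
    (h3 : 3 ≤ Fintype.card α) (y : α) : ∃ p ∈ P, p y ≠ y := by
  by_contra! hcon
  let s : Setoid α :=
    { r := fun a c => (a = y ↔ c = y)
      iseqv := ⟨fun _ => Iff.rfl, fun h => h.symm, fun h h' => h.trans h'⟩ }
  have hinv : ∀ p ∈ P, ∀ a c, s a c → s (p a) (p c) := by
    intro p hp a c h
    have e : ∀ a, p a = y ↔ a = y := fun a => by
      conv_lhs => rw [← hcon p hp]
      exact p.injective.eq_iff
    change p a = y ↔ p c = y
    rw [e, e]
    exact h
  obtain ⟨a, ha, c, hc, hac⟩ := Finset.one_lt_card.1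
    (show 1 < (Finset.univ.erase y).card by
      rw [Finset.card_erase_of_mem (Finset.mem_univ _), Finset.card_univ]; omega)
  have ha := Finset.ne_of_mem_erase ha
  have hc := Finset.ne_of_mem_erase hc
  rcases hP s hinv with h | h
  · exact hac (h a c (iff_of_false ha hc))
  · exact ha ((h a y).2 rfl)

theorem exists_pair_mem_of_large_orbit (hP : IsPrimitivePermGroup P) (h3 : 3 ≤ Fintype.card α)
    {E : Subgroup (Perm α)} (hEP : E ≤ P) (hE : ∀ g ∈ E, g * g = 1) {x : α}
    (hx : Fintype.card α ≤ (orbitFinset E x).card + 1) {W : AddSubgroup (α → ZMod 2)}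
    (hW : IsInvariantCode P W) (hne : W ≠ ⊥) (h1 : (1 : α → ZMod 2) ∉ W) :
    ∃ a c, a ≠ c ∧ indicatorVec {a} + indicatorVec {c} ∈ W := by
  obtain ⟨w, hw, hw0, hfix⟩ := exists_fixed_codeword hE (fun p hp => hW p (hEP hp)) hne
  have hconst : ∀ i ∈ orbitFinset E x, w i = w x := by
    intro i hi
    obtain ⟨g, hg, rfl⟩ := mem_orbitFinset.1 hi
    exact hfix g hg x
  have hnc : ∃ y, w y ≠ w x := by
    by_contra! h
    rcases zmod_two_eq (w x) with h' | h'
    · exact hw0 (funext fun y => (h y).trans h')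
    · exact h1 ((show w = 1 from funext fun y => (h y).trans h') ▸ hw)
  obtain ⟨y, hy⟩ := hnc
  have hyO : y ∉ orbitFinset E x := fun h => hy (hconst y h)
  have hall : ∀ i, i ≠ y → w i = w x := by
    intro i hi
    by_contra hne
    have hiO : i ∉ insert y (orbitFinset E x) := by
      simp only [Finset.mem_insert, not_or]
      exact ⟨hi, fun h => hne (hconst i h)⟩
    have := Finset.card_lt_univ_of_notMem hiO
    rw [Finset.card_insert_of_notMem hyO] at this
    omega
  obtain ⟨p, hp, hpy⟩ := hP.exists_apply_ne h3 y
  refine ⟨y, p⁻¹ y, fun e => hpy (by rw [Perm.eq_inv_iff_eq] at e; exact e), ?_⟩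
  convert W.add_mem hw (hW p hp w hw) using 1
  funext i
  have hpi : p i = y ↔ i = p⁻¹ y := by rw [Perm.eq_inv_iff_eq]
  have key : ∀ a c : ZMod 2, a ≠ c → (1 : ZMod 2) = a + c := by decide
  simp only [Pi.add_apply, indicatorVec, Finset.mem_singleton]
  by_cases h1 : i = y
  · have h2 : i ≠ p⁻¹ y := fun e => hpy (by rw [← h1]; exact h1 ▸ hpi.2 e)
    rw [if_pos h1, if_neg h2, hall (p i) (fun e => h2 (hpi.1 e)), h1, add_zero]
    exact key _ _ hy
  · by_cases h2 : i = p⁻¹ y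
    · rw [if_neg h1, if_pos h2, hall i h1, hpi.2 h2, zero_add]
      exact key _ _ hy.symm
    · rw [if_neg h1, if_neg h2, hall i h1, hall (p i) (fun e => h2 (hpi.1 e)), add_zero,
        CharTwo.add_self_eq_zero]

theorem isTetrad_support (hP : IsPrimitivePermGroup P)
    {τ : Perm α} (hτP : τ ∈ P) (hτ1 : τ ≠ 1) (hτ2 : τ * τ = 1) (hτ4 : τ.support.card ≤ 4)
    {W : AddSubgroup (α → ZMod 2)} (hW : IsInvariantCode P W) (hne : W ≠ ⊥)
    (h1 : (1 : α → ZMod 2) ∉ W)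
    (hpair : ∀ x y : α, x ≠ y → indicatorVec {x} + indicatorVec {y} ∉ W) :
    IsTetrad W τ.support ∧ ∀ w ∈ W, ∑ i ∈ τ.support, w i = 0 := by
  have hττ : ∀ i, τ (τ i) = i := fun i => by rw [← Perm.mul_apply, hτ2, Perm.one_apply]
  obtain ⟨x, hx⟩ : ∃ x, τ x ≠ x := by
    by_contra! h
    exact hτ1 (Perm.ext h)
  obtain ⟨u, hu, hux, huy⟩ : ∃ u, τ u ≠ u ∧ u ≠ x ∧ u ≠ τ x := by
    by_contra! h
    obtain ⟨w, hw, hwx⟩ := exists_separating_codeword hP hW h1 hne hx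
    apply hpair x (τ x) hx.symm
    convert W.add_mem hw (hW τ hτP w hw) using 1
    have key : ∀ a c : ZMod 2, a ≠ c → (1 : ZMod 2) = a + c := by decide
    funext i
    simp only [Pi.add_apply, indicatorVec, Finset.mem_singleton]
    by_cases hix : i = x
    · rw [hix, if_pos rfl, if_neg hx.symm, add_zero]
      exact key _ _ hwx.symm
    · by_cases hiy : i = τ x
      · rw [hiy, if_pos rfl, if_neg hx, hττ, zero_add]
        exact key _ _ hwx
      · rw [if_neg hix, if_neg hiy]
        by_cases hi : τ i = i
        · rw [hi, CharTwo.add_self_eq_zero, CharTwo.add_self_eq_zero]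
        · exact absurd (h i hi hix) hiy
  have hvx : τ u ≠ x := fun e => huy (by rw [← e, hττ])
  have hvy : τ u ≠ τ x := fun e => hux (τ.injective e)
  have hsub : ({x, τ x, u, τ u} : Finset α) ⊆ τ.support := by
    intro i hi
    simp only [Finset.mem_insert, Finset.mem_singleton] at hi
    rw [Perm.mem_support]
    rcases hi with rfl | rfl | rfl | rfl
    · exact hx
    · rw [hττ]; exact hx.symm
    · exact hu
    · rw [hττ]; exact hu.symm
  have hcard : ({x, τ x, u, τ u} : Finset α).card = 4 := by
    rw [Finset.card_insert_of_notMem (by simp [hx.symm, hux.symm, hvx.symm]),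
      Finset.card_insert_of_notMem (by simp [huy.symm, hvy.symm]),
      Finset.card_pair hu.symm]
  have hsupp : τ.support = {x, τ x, u, τ u} :=
    (Finset.eq_of_subset_of_card_le hsub (by rw [hcard]; exact hτ4)).symm
  have hfix : ∀ i, i ≠ x → i ≠ τ x → i ≠ u → i ≠ τ u → τ i = i := by
    intro i h1 h2 h3 h4
    rw [← Perm.notMem_support, hsupp]
    simp [h1, h2, h3, h4]
  have hsum : ∀ w : α → ZMod 2, ∑ i ∈ τ.support, w i = (w x + w (τ x)) + (w u + w (τ u)) := by
    intro w
    rw [hsupp, Finset.sum_insert (by simp [hx.symm, hux.symm, hvx.symm]),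
      Finset.sum_insert (by simp [huy.symm, hvy.symm]), Finset.sum_pair hu.symm, add_assoc]
  have hdec : ∀ w : α → ZMod 2, ∀ i, w i + w (τ i) =
      (w x + w (τ x)) * (indicatorVec {x} + indicatorVec {τ x}) i +
      (w u + w (τ u)) * (indicatorVec {u} + indicatorVec {τ u}) i := by
    intro w i
    simp only [Pi.add_apply, indicatorVec, Finset.mem_singleton]
    by_cases h1 : i = x
    · subst h1
      simp [hx.symm, hux.symm, hvx.symm]
    by_cases h2 : i = τ x
    · subst h2
      simp [hx, hττ, huy.symm, hvy.symm, add_comm]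
    by_cases h3 : i = u
    · subst h3
      simp [hu.symm, hux, huy]
    by_cases h4 : i = τ u
    · subst h4
      simp [hu, hττ, hvx, hvy, add_comm]
    rw [hfix i h1 h2 h3 h4]
    simp [h1, h2, h3, h4, CharTwo.add_self_eq_zero]
  have hmem : ∀ w ∈ W, (fun i => (w x + w (τ x)) * (indicatorVec {x} + indicatorVec {τ x}) i +
      (w u + w (τ u)) * (indicatorVec {u} + indicatorVec {τ u}) i) ∈ W := by
    intro w hw
    have := W.add_mem hw (hW τ hτP w hw)
    rwa [show (w + fun i => w (τ i)) = _ from funext (hdec w)] at this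
  have heq : ∀ w ∈ W, w x + w (τ x) = w u + w (τ u) := by
    intro w hw
    have := hmem w hw
    rcases zmod_two_eq (w x + w (τ x)) with h | h <;>
      rcases zmod_two_eq (w u + w (τ u)) with h' | h' <;> rw [h, h'] at this ⊢
    · simp only [zero_mul, one_mul, zero_add] at this
      exact absurd this (hpair _ _ hu.symm)
    · simp only [zero_mul, one_mul, add_zero] at this
      exact absurd this (hpair _ _ hx.symm)
  refine ⟨⟨by rw [hsupp, hcard], ?_⟩, fun w hw => by
    rw [hsum, heq w hw, CharTwo.add_self_eq_zero]⟩
  obtain ⟨w, hw, hwx⟩ := exists_separating_codeword hP hW h1 hne hx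
  have h1 : w x + w (τ x) = 1 :=
    (zmod_two_eq _).resolve_left fun h => hwx (CharTwo.add_eq_zero.1 h).symm
  have := hmem w hw
  rw [← heq w hw, h1] at this
  convert this using 1
  funext i
  simp only [one_mul, Pi.add_apply, indicatorVec, hsupp, Finset.mem_insert, Finset.mem_singleton]
  by_cases h1 : i = x
  · subst h1
    simp [hx.symm, hux.symm, hvx.symm]
  by_cases h2 : i = τ x
  · subst h2
    simp [hx, huy.symm, hvy.symm]
  by_cases h3 : i = u
  · subst h3
    simp [hu.symm, hux, huy]
  by_cases h4 : i = τ u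
  · subst h4
    simp [hu, hvx, hvy]
  simp [h1, h2, h3, h4]

/-- Two invariant codes inside an invariant code without the all-one word are comparable, when the
group is primitive and has a large elementary abelian 2-subgroup. -/
theorem le_or_le_of_isInvariantCode (hP : IsPrimitivePermGroup P) (h7 : 7 ≤ Fintype.card α)
    {E : Subgroup (Perm α)} (hEP : E ≤ P) (hE : ∀ g ∈ E, g * g = 1)
    (hcard : 2 ^ Fintype.card α ≤ 8 * Nat.card E ^ 2) {V W₁ W₂ : AddSubgroup (α → ZMod 2)}
    (h1 : (1 : α → ZMod 2) ∉ V) (hV₁ : W₁ ≤ V) (hV₂ : W₂ ≤ V)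
    (hW₁ : IsInvariantCode P W₁) (hW₂ : IsInvariantCode P W₂) : W₁ ≤ W₂ ∨ W₂ ≤ W₁ := by
  by_cases hb₁ : W₁ = ⊥
  · exact Or.inl (hb₁ ▸ bot_le)
  by_cases hb₂ : W₂ = ⊥
  · exact Or.inr (hb₂ ▸ bot_le)
  by_cases hp₁ : ∃ a c, a ≠ c ∧ indicatorVec {a} + indicatorVec {c} ∈ W₁
  · obtain ⟨a, c, hac, h⟩ := hp₁
    exact Or.inr (hV₂.trans
      (le_of_indicatorVec_pair_mem hV₁ h1 (indicatorVec_pair_mem hP hW₁ hac h)))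
  by_cases hp₂ : ∃ a c, a ≠ c ∧ indicatorVec {a} + indicatorVec {c} ∈ W₂
  · obtain ⟨a, c, hac, h⟩ := hp₂
    exact Or.inl (hV₁.trans
      (le_of_indicatorVec_pair_mem hV₂ h1 (indicatorVec_pair_mem hP hW₂ hac h)))
  have h1₁ : (1 : α → ZMod 2) ∉ W₁ := fun h => h1 (hV₁ h)
  rcases exists_small_support_or_large_orbit hE h7 hcard with ⟨τ, hτ, hτ1, hτ4⟩ | ⟨x, hx⟩
  swap
  · exact absurd (exists_pair_mem_of_large_orbit hP (by omega) hEP hE hx hW₁ hb₁ h1₁) hp₁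
  push Not at hp₁ hp₂
  obtain ⟨ht₁, hs₁⟩ := isTetrad_support hP (hEP hτ) hτ1 (hE τ hτ) hτ4 hW₁ hb₁ h1₁ hp₁
  obtain ⟨ht₂, hs₂⟩ := isTetrad_support hP (hEP hτ) hτ1 (hE τ hτ) hτ4 hW₂ hb₂
    (fun h => h1 (hV₂ h)) hp₂
  let T : AddSubgroup (α → ZMod 2) :=
    { carrier := {v | v ∈ W₁ ∧ v ∈ W₂ ∧ ∀ w, w ∈ W₁ ∨ w ∈ W₂ → ∑ i, w i * v i = 0}
      zero_mem' := ⟨W₁.zero_mem, W₂.zero_mem, fun w _ => by simp⟩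
      add_mem' := by
        rintro u v ⟨hu₁, hu₂, hu⟩ ⟨hv₁, hv₂, hv⟩
        refine ⟨W₁.add_mem hu₁ hv₁, W₂.add_mem hu₂ hv₂, fun w hw => ?_⟩
        simp only [Pi.add_apply, mul_add, Finset.sum_add_distrib, hu w hw, hv w hw, add_zero]
      neg_mem' := by
        rintro u ⟨hu₁, hu₂, hu⟩
        refine ⟨W₁.neg_mem hu₁, W₂.neg_mem hu₂, fun w hw => ?_⟩
        simp only [Pi.neg_apply, mul_neg, Finset.sum_neg_distrib, hu w hw, neg_zero] }
  have hTP : IsInvariantCode P T := by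
    rintro p hp v ⟨hv₁, hv₂, hv⟩
    refine ⟨hW₁ p hp v hv₁, hW₂ p hp v hv₂, fun w hw => ?_⟩
    have h := hv _ (hw.imp (hW₁ p⁻¹ (inv_mem hp) w) (hW₂ p⁻¹ (inv_mem hp) w))
    rw [← Equiv.sum_comp p] at h
    simpa using h
  have hTt : IsTetrad T τ.support := by
    refine ⟨ht₁.1, ht₁.2, ht₂.2, fun w hw => ?_⟩
    rw [sum_mul_indicatorVec]
    exact hw.elim (hs₁ w) (hs₂ w)
  left
  intro w hw
  rcases mem_or_add_one_mem_of_orthogonal hP hTP h7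
    (fun v hv u hu => hu.2.2 v (Or.inl hv.1)) hTt (fun h => h1₁ h.1)
    (fun x y hxy h => hp₁ x y hxy h.1) (fun v hv => hv.2.2 w (Or.inl hw)) with h | h
  · exact h.2.1
  · exact absurd ((W₁.add_mem_cancel_left hw).1 h.1) h1₁

end Comparability

theorem conj_mem_of_mem_sup {G : Type*} [Group G] {A B N : Subgroup G}
    (hcomm : ∀ a ∈ A, ∀ b ∈ B, Commute a b) (hNA : N ≤ A)
    (hN : ∀ a ∈ A, ∀ g ∈ N, a * g * a⁻¹ ∈ N) : ∀ p ∈ A ⊔ B, ∀ g ∈ N, p * g * p⁻¹ ∈ N := by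
  have hB : ∀ b ∈ B, ∀ g ∈ N, b * g * b⁻¹ ∈ N := fun b hb g hg => by
    rwa [← (hcomm g (hNA hg) b hb).eq, mul_inv_cancel_right]
  intro p hp
  rw [Subgroup.sup_eq_closure] at hp
  induction hp using Subgroup.closure_induction'' with
  | mem p hp => exact hp.elim (hN p) (hB p)
  | inv_mem p hp => exact hp.elim (fun h => hN _ (inv_mem h)) (fun h => hB _ (inv_mem h))
  | one => simp
  | mul p q _ _ hp hq =>
    intro g hg
    have := hp _ (hq g hg)
    simpa [mul_assoc] using this

section Primitive

variable {α : Type*} [Fintype α] {P : Subgroup (Perm α)}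

theorem IsPrimitivePermGroup.eq_one_of_commute (hP : IsPrimitivePermGroup P)
    (h3 : 3 ≤ Fintype.card α) {q : Perm α} (hq : q * q = 1) (hcomm : ∀ p ∈ P, Commute p q) :
    q = 1 := by
  have hqq : ∀ x, q (q x) = x := fun x => by rw [← Perm.mul_apply, hq, Perm.one_apply]
  let s : Setoid α :=
    { r := fun x y => y = x ∨ y = q x
      iseqv := ⟨fun _ => Or.inl rfl, by
          rintro x y (rfl | rfl)
          · exact Or.inl rfl
          · exact Or.inr (hqq x).symm, by
          rintro x y w (rfl | rfl) (rfl | rfl)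
          · exact Or.inl rfl
          · exact Or.inr rfl
          · exact Or.inr rfl
          · exact Or.inl (hqq x)⟩ }
  have hinv : ∀ p ∈ P, ∀ x y, s x y → s (p x) (p y) := by
    rintro p hp x y (rfl | rfl)
    · exact Or.inl rfl
    · exact Or.inr (by rw [← Perm.mul_apply, (hcomm p hp).eq, Perm.mul_apply])
  rcases hP s hinv with h | h
  · exact Perm.ext fun x => (h x (q x) (Or.inr rfl)).symm
  · classical
    exfalso
    have : Nonempty α := Fintype.card_pos_iff.1 (by omega)
    obtain ⟨x⟩ := this
    have hsub : (Finset.univ : Finset α) ⊆ {x, q x} := fun y _ => by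
      have := h x y
      change y = x ∨ y = q x at this
      simpa using this
    have := (Finset.card_le_card hsub).trans Finset.card_le_two
    rw [Finset.card_univ] at this
    omega

theorem IsPrimitivePermGroup.exists_apply_eq (hP : IsPrimitivePermGroup P)
    {N : Subgroup (Perm α)} (hN : N ≠ ⊥) (hnorm : ∀ p ∈ P, ∀ g ∈ N, p * g * p⁻¹ ∈ N) (x y : α) :
    ∃ g ∈ N, g x = y := by
  let s : Setoid α :=
    { r := fun x y => ∃ g ∈ N, g x = y
      iseqv := ⟨fun _ => ⟨1, one_mem _, rfl⟩, by
          rintro x y ⟨g, hg, rfl⟩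
          exact ⟨g⁻¹, inv_mem hg, by simp⟩, by
          rintro x y w ⟨g, hg, rfl⟩ ⟨h, hh, rfl⟩
          exact ⟨h * g, mul_mem hh hg, rfl⟩⟩ }
  have hinv : ∀ p ∈ P, ∀ x y, s x y → s (p x) (p y) := by
    rintro p hp x y ⟨g, hg, rfl⟩
    exact ⟨_, hnorm p hp g hg, by simp⟩
  rcases hP s hinv with h | h
  · exfalso
    apply hN
    rw [Subgroup.eq_bot_iff_forall]
    exact fun g hg => Perm.ext fun x => (h x (g x) ⟨g, hg, rfl⟩).symm
  · exact h x y

section Split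

variable {A B : Subgroup (Perm α)}

theorem eq_one_of_apply_eq (hP : IsPrimitivePermGroup (A ⊔ B))
    (hcomm : ∀ a ∈ A, ∀ b ∈ B, Commute a b) (hB : B ≠ ⊥) {a : Perm α} (ha : a ∈ A) {x : α} (hx : a x = x) :
    a = 1 := by
  refine Perm.ext fun y => ?_
  rw [sup_comm] at hP
  obtain ⟨g, hg, rfl⟩ := hP.exists_apply_eq hB (conj_mem_of_mem_sup
    (fun b hb a ha => (hcomm a ha b hb).symm) le_rfl
    fun b hb g hg => mul_mem (mul_mem hb hg) (inv_mem hb)) x y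
  rw [← Perm.mul_apply, (hcomm a ha g hg).eq, Perm.mul_apply, hx, Perm.one_apply]

theorem eq_of_le_of_conj_mem [Nonempty α] (hP : IsPrimitivePermGroup (A ⊔ B))
    (hcomm : ∀ a ∈ A, ∀ b ∈ B, Commute a b) (hB : B ≠ ⊥) {N : Subgroup (Perm α)} (hNA : N ≤ A)
    (hN : N ≠ ⊥) (hnorm : ∀ a ∈ A, ∀ g ∈ N, a * g * a⁻¹ ∈ N) : N = A := by
  refine le_antisymm hNA fun a ha => ?_
  obtain ⟨x⟩ := ‹Nonempty α›
  obtain ⟨g, hg, hgx⟩ := hP.exists_apply_eq hN (conj_mem_of_mem_sup hcomm hNA hnorm) x (a x)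
  have : g⁻¹ * a = 1 := eq_one_of_apply_eq hP hcomm hB (mul_mem (inv_mem (hNA hg)) ha)
    (x := x) (by rw [Perm.mul_apply, ← hgx, Perm.inv_eq_iff_eq])
  rw [inv_mul_eq_one] at this
  exact this ▸ hg

theorem card_eq_of_sup [Nonempty α] (hP : IsPrimitivePermGroup (A ⊔ B))
    (hcomm : ∀ a ∈ A, ∀ b ∈ B, Commute a b) (hA : A ≠ ⊥) (hB : B ≠ ⊥) :
    Nat.card A = Fintype.card α := by
  obtain ⟨x⟩ := ‹Nonempty α›
  rw [← Nat.card_eq_fintype_card]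
  refine Nat.card_eq_of_bijective (fun a : A => a.1 x) ⟨fun a c h => ?_, fun y => ?_⟩
  · have : (c⁻¹ * a : A).1 = 1 := eq_one_of_apply_eq hP hcomm hB (c⁻¹ * a : A).2 (x := x) (by
      change (c.1⁻¹ * a.1) x = x
      rw [Perm.mul_apply]
      exact (Perm.inv_eq_iff_eq).2 h)
    exact (inv_mul_eq_one.1 (Subtype.ext this : (c⁻¹ * a : A) = 1)).symm
  · obtain ⟨g, hg, h⟩ := hP.exists_apply_eq hA (conj_mem_of_mem_sup hcomm le_rfl
      fun b hb g hg => mul_mem (mul_mem hb hg) (inv_mem hb)) x y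
    exact ⟨⟨g, hg⟩, h⟩

end Split

end Primitive

theorem two_mul_card_le_of_lt {G : Type*} [Group G] [Finite G] {H K : Subgroup G} (h : H < K) :
    2 * Nat.card H ≤ Nat.card K := by
  obtain ⟨k, hk⟩ := Subgroup.card_dvd_of_le h.le
  have hpos : 0 < Nat.card K := Nat.card_pos
  rcases k with _ | _ | k
  · omega
  · exact absurd (Subgroup.eq_of_le_of_card_ge h.le (by omega)) h.ne
  · rw [hk]
    nlinarith [Nat.card_pos (α := H)]

theorem two_pow_ncard_le_card_closure {G ι : Type*} [Group G] [Finite G] [Finite ι] (π : ι → G)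
    (S : Set ι) (hind : ∀ l ∈ S, π l ∉ Subgroup.closure (π '' (S \ {l}))) :
    2 ^ S.ncard ≤ Nat.card (Subgroup.closure (π '' S)) := by
  induction S, S.toFinite using Set.Finite.induction_on with
  | empty => simp
  | @insert a S ha _ ih =>
    have hS : (insert a S) \ {a} = S := by simp [ha]
    have hlt : Subgroup.closure (π '' S) < Subgroup.closure (π '' insert a S) := by
      refine lt_of_le_of_ne (Subgroup.closure_mono (Set.image_mono (Set.subset_insert a S)))
        fun e => hind a (Set.mem_insert a S) ?_
      rw [hS, e]
      exact Subgroup.subset_closure ⟨a, Set.mem_insert a S, rfl⟩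
    have := ih fun l hl h => hind l (Set.mem_insert_of_mem a hl)
      (Subgroup.closure_mono (Set.image_mono
        (Set.sdiff_subset_sdiff_left (Set.subset_insert a S))) h)
    rw [Set.ncard_insert_of_notMem ha, pow_succ]
    have := two_mul_card_le_of_lt hlt
    omega

theorem six_le_card_of_not_commute {G : Type*} [Group G] [Finite G] {D : Subgroup G} {u v : G}
    (hu : u ∈ D) (hv : v ∈ D) (hu2 : u * u = 1) (huv : ¬ Commute u v) : 6 ≤ Nat.card D := by
  classical
  have h1 : u ≠ 1 := by rintro rfl; exact huv (Commute.one_left v)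
  have h2 : v ≠ 1 := by rintro rfl; exact huv (Commute.one_right u)
  have h3 : u ≠ v := by rintro rfl; exact huv (Commute.refl u)
  have h4 : u * v ≠ 1 := fun h => huv (by
    rw [← inv_eq_of_mul_eq_one_right h]
    exact (Commute.refl u).inv_right)
  have h5 : v * u ≠ 1 := fun h => huv (by
    rw [← inv_eq_of_mul_eq_one_left h]
    exact (Commute.refl u).inv_right)
  have h6 : u * v ≠ v * u := huv
  have hcard : ({1, u, v, u * v, v * u} : Finset G).card = 5 := by
    rw [Finset.card_insert_of_notMem (by simp [h1.symm, h2.symm, h4.symm, h5.symm]),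
      Finset.card_insert_of_notMem (by simp [h3, h2]),
      Finset.card_insert_of_notMem (by simp [h1]),
      Finset.card_pair h6]
  have hsub : (({1, u, v, u * v, v * u} : Finset G) : Set G) ⊆ D := by
    intro g hg
    simp only [Finset.coe_insert, Finset.coe_singleton, Set.mem_insert_iff,
      Set.mem_singleton_iff] at hg
    rcases hg with rfl | rfl | rfl | rfl | rfl
    exacts [one_mem _, hu, hv, mul_mem hu hv, mul_mem hv hu]
  have h5 := Set.ncard_le_ncard hsub
  rw [Set.ncard_coe_finset, hcard, ← Nat.card_coe_set_eq] at h5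
  have h2 : 2 ∣ Nat.card D := by
    have h := Subgroup.orderOf_dvd_natCard D hu
    rwa [orderOf_eq_prime (p := 2) (by rw [pow_two, hu2]) h1] at h
  change 5 ≤ Nat.card D at h5
  omega

/-- Two commuting parts of an independent generating set of involutions of a primitive group:
the degree is at least twelve, bounds the part exponentially, and the part cannot be split again. -/
theorem bounds_of_commuting_parts {α ι : Type*} [Fintype α] [Finite ι] (h3 : 3 ≤ Fintype.card α)
    {π : ι → Perm α} (hπ : ∀ i, π i * π i = 1) {S S' : Set ι}
    (hP : IsPrimitivePermGroup (Subgroup.closure (π '' (S ∪ S'))))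
    (hind : ∀ l ∈ S ∪ S', π l ∉ Subgroup.closure (π '' ((S ∪ S') \ {l})))
    (hcomm : ∀ s ∈ S, ∀ s' ∈ S', Commute (π s) (π s'))
    (hS : S.Nonempty) (hS' : S'.Nonempty) :
    12 ≤ Fintype.card α ∧ 2 ^ S.ncard ≤ Fintype.card α ∧
      ∀ S₁ S₂, S₁ ∪ S₂ = S → Disjoint S₁ S₂ → S₁.Nonempty → S₂.Nonempty →
        ¬ ∀ s ∈ S₁, ∀ s' ∈ S₂, Commute (π s) (π s') := by
  have hne : Nonempty α := Fintype.card_pos_iff.1 (by omega)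
  have hcl : ∀ {X Y : Set ι}, (∀ s ∈ X, ∀ s' ∈ Y, Commute (π s) (π s')) →
      ∀ a ∈ Subgroup.closure (π '' X), ∀ b ∈ Subgroup.closure (π '' Y), Commute a b := by
    intro X Y h
    have h' : Subgroup.closure (π '' X) ≤ Subgroup.centralizer (π '' Y) := by
      rw [Subgroup.closure_le]
      rintro _ ⟨s, hs, rfl⟩ _ ⟨s', hs', rfl⟩
      exact (h s hs s' hs').symm.eq
    intro a ha b hb
    have := Subgroup.closure_le_centralizer_centralizer (π '' Y) hb
    exact (this a (h' ha))
  have hsup : ∀ X Y : Set ι, Subgroup.closure (π '' X) ⊔ Subgroup.closure (π '' Y) =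
      Subgroup.closure (π '' (X ∪ Y)) := fun X Y => by
    rw [Set.image_union, Subgroup.closure_union]
  have hmono : ∀ {X Y : Set ι}, X ⊆ Y → Subgroup.closure (π '' X) ≤ Subgroup.closure (π '' Y) :=
    fun h => Subgroup.closure_mono (Set.image_mono h)
  have hmem : ∀ {X : Set ι} {l}, l ∈ X → π l ∈ Subgroup.closure (π '' X) :=
    fun h => Subgroup.subset_closure ⟨_, h, rfl⟩
  have hne1 : ∀ l ∈ S ∪ S', π l ≠ 1 := fun l hl h => hind l hl (h ▸ one_mem _)
  have hbot : ∀ {X : Set ι}, X ⊆ S ∪ S' → X.Nonempty → Subgroup.closure (π '' X) ≠ ⊥ := by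
    rintro X hX ⟨l, hl⟩ h
    exact hne1 l (hX hl) (Subgroup.mem_bot.1 (h ▸ hmem hl))
  have hcard : ∀ {X Y : Set ι}, X ∪ Y = S ∪ S' → X.Nonempty → Y.Nonempty →
      (∀ s ∈ X, ∀ s' ∈ Y, Commute (π s) (π s')) →
      Nat.card (Subgroup.closure (π '' X)) = Fintype.card α := by
    intro X Y h hX hY hXY
    refine card_eq_of_sup (B := Subgroup.closure (π '' Y)) ?_ (hcl hXY)
      (hbot (h ▸ Set.subset_union_left) hX) (hbot (h ▸ Set.subset_union_right) hY)
    rw [hsup, h]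
    exact hP
  have hA := hcard rfl hS hS' hcomm
  refine ⟨?_, ?_, ?_⟩
  · obtain ⟨a, ha, c, hc, hac⟩ : ∃ a ∈ S, ∃ c ∈ S, ¬ Commute (π a) (π c) := by
      by_contra! h
      obtain ⟨a, ha⟩ := hS
      refine hne1 a (Or.inl ha) (hP.eq_one_of_commute h3 (hπ a) fun p hp =>
        hcl (X := S ∪ S') (Y := {a}) ?_ p hp (π a) (hmem rfl))
      rintro s (hs | hs) _ rfl
      · exact h s hs _ ha
      · exact (hcomm _ ha s hs).symm
    have hdS : ∃ d ∈ S, d ≠ a ∧ d ≠ c := by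
      by_contra! h
      have hSac : S = {a, c} := Set.Subset.antisymm
        (fun d hd => (em (d = a)).imp_right fun hda => h d hd hda)
        (by rintro d (rfl | rfl) <;> assumption)
      have hinv : ∀ i, (π i)⁻¹ = π i := fun i => inv_eq_of_mul_eq_one_left (hπ i)
      have hconj : ∀ p ∈ Subgroup.closure (π '' S), ∀ g ∈ Subgroup.zpowers (π a * π c),
          p * g * p⁻¹ ∈ Subgroup.zpowers (π a * π c) := by
        have hgen : ∀ i ∈ S, π i * (π a * π c) * (π i)⁻¹ = (π a * π c)⁻¹ := by
          intro i hi
          rw [hSac] at hi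
          rw [mul_inv_rev, hinv, hinv, hinv]
          rcases hi with rfl | rfl
          · rw [← mul_assoc, hπ, one_mul]
          · rw [mul_assoc, mul_assoc, hπ, mul_one]
        have hgen' : ∀ i ∈ S, ∀ g ∈ Subgroup.zpowers (π a * π c),
            π i * g * (π i)⁻¹ ∈ Subgroup.zpowers (π a * π c) := by
          rintro i hi _ ⟨k, rfl⟩
          simp only
          rw [← conj_zpow, hgen i hi]
          exact zpow_mem (inv_mem (Subgroup.mem_zpowers _)) _
        intro p hp
        induction hp using Subgroup.closure_induction'' with
        | mem p hp =>
          obtain ⟨i, hi, rfl⟩ := hp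
          exact hgen' i hi
        | inv_mem p hp =>
          obtain ⟨i, hi, rfl⟩ := hp
          rw [hinv]
          exact hgen' i hi
        | one => simp
        | mul p q _ _ hp hq =>
          intro g hg
          have := hp _ (hq g hg)
          simpa [mul_assoc] using this
      have heq := eq_of_le_of_conj_mem (B := Subgroup.closure (π '' S'))
        (by rw [hsup]; exact hP) (hcl hcomm) (hbot Set.subset_union_right hS')
        (by
          rw [Subgroup.zpowers_le]
          exact mul_mem (hmem ha) (hmem hc))
        (by
          rw [Ne, Subgroup.zpowers_eq_bot]
          intro h
          apply hac
          rw [← inv_eq_of_mul_eq_one_right h]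
          exact (Commute.refl _).inv_right) hconj
      have ha' := heq ▸ hmem ha
      have hc' := heq ▸ hmem hc
      obtain ⟨j, hj⟩ := ha'
      obtain ⟨k, hk⟩ := hc'
      have hjk := (Commute.refl (π a * π c)).zpow_zpow j k
      simp only at hj hk
      rw [hj, hk] at hjk
      exact hac hjk
    obtain ⟨d, hd, hda, hdc⟩ := hdS
    have hlt : Subgroup.closure (π '' {a, c}) < Subgroup.closure (π '' S) := by
      refine lt_of_le_of_ne (hmono (by rintro x (rfl | rfl) <;> assumption)) fun e => ?_
      have h : π d ∈ Subgroup.closure (π '' {a, c}) := e ▸ hmem hd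
      refine hind d (Or.inl hd) (hmono ?_ h)
      rintro x (rfl | rfl)
      · exact ⟨Or.inl ha, hda.symm⟩
      · exact ⟨Or.inl hc, hdc.symm⟩
    have h6 := six_le_card_of_not_commute (D := Subgroup.closure (π '' {a, c}))
      (hmem (Or.inl rfl)) (hmem (Or.inr rfl)) (hπ a) hac
    have := two_mul_card_le_of_lt hlt
    omega
  · rw [← hA]
    exact two_pow_ncard_le_card_closure π S fun l hl h =>
      hind l (Or.inl hl) (hmono (Set.sdiff_subset_sdiff_left Set.subset_union_left) h)
  · rintro S₁ S₂ rfl h12 hS1 hS2 h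
    have h1 := hcard (X := S₁) (Y := S₂ ∪ S') (by rw [Set.union_assoc]) hS1 (hS2.mono (by simp))
      (by
        rintro s hs s' (hs' | hs')
        · exact h s hs s' hs'
        · exact hcomm s (Or.inl hs) s' hs')
    have heq := Subgroup.eq_of_le_of_card_ge (hmono (Set.subset_union_left : S₁ ⊆ S₁ ∪ S₂))
      (by rw [hA, h1])
    obtain ⟨l, hl⟩ := hS2
    refine hind l (Or.inl (Or.inr hl)) (hmono (X := S₁) ?_ ?_)
    swap
    · rw [heq]
      exact hmem (Or.inr hl)
    exact fun x hx => ⟨Or.inl (Or.inl hx), fun e => Set.disjoint_left.1 h12 hx (e ▸ hl)⟩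

/-- A map `b` whose fibers are the orbits of a fixed-point-free involution `z`. -/
structure IsTwoFibration {β α : Type*} (b : β → α) (z : Perm β) : Prop where
  surjective : Function.Surjective b
  apply_apply : ∀ x, z (z x) = x
  map_apply : ∀ x, b (z x) = b x
  apply_ne : ∀ x, z x ≠ x
  eq_or_eq : ∀ x y, b y = b x → y = x ∨ y = z x

theorem exists_isTwoFibration {β α : Type*} [Finite β] {b : β → α} (hb : Function.Surjective b)
    (hfib : ∀ c, Set.ncard {x | b x = c} = 2) : ∃ z, IsTwoFibration b z := by
  have key : ∀ x, ∃ y, y ≠ x ∧ b y = b x ∧ ∀ u, b u = b x → u = x ∨ u = y := by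
    intro x
    obtain ⟨u, v, huv, h⟩ := Set.ncard_eq_two.1 (hfib (b x))
    have hmem : ∀ y, b y = b x ↔ y = u ∨ y = v := fun y => by
      change y ∈ {y | b y = b x} ↔ _
      rw [h]
      simp
    rcases (hmem x).1 rfl with rfl | rfl
    · exact ⟨v, huv.symm, (hmem v).2 (Or.inr rfl), fun y hy => (hmem y).1 hy⟩
    · exact ⟨u, huv, (hmem u).2 (Or.inl rfl), fun y hy => ((hmem y).1 hy).symm⟩
  choose f hne hbf hu using key
  have hff : Function.Involutive f := by
    intro x
    have := hu x (f (f x)) ((hbf _).trans (hbf _))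
    exact this.resolve_right (hne _)
  exact ⟨hff.toPerm f, hb, hff, hbf, hne, fun x y h => hu x y h⟩

namespace IsTwoFibration

variable {β α : Type*} {b : β → α} {z : Perm β}

/-- The permutation swapping the fibers over the support of `w`. -/
def fiberPerm (hz : IsTwoFibration b z) (w : α → ZMod 2) : Perm β where
  toFun x := if w (b x) = 0 then x else z x
  invFun x := if w (b x) = 0 then x else z x
  left_inv x := by by_cases h : w (b x) = 0 <;> simp [h, hz.map_apply, hz.apply_apply]
  right_inv x := by by_cases h : w (b x) = 0 <;> simp [h, hz.map_apply, hz.apply_apply]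

theorem fiberPerm_apply (hz : IsTwoFibration b z) (w : α → ZMod 2) (x : β) :
    hz.fiberPerm w x = if w (b x) = 0 then x else z x := rfl

theorem fiberPerm_zero (hz : IsTwoFibration b z) : hz.fiberPerm 0 = 1 := Perm.ext fun x => by simp [fiberPerm_apply]

theorem fiberPerm_one (hz : IsTwoFibration b z) : hz.fiberPerm 1 = z := Perm.ext fun x => by simp [fiberPerm_apply]

theorem fiberPerm_add (hz : IsTwoFibration b z) (v w : α → ZMod 2) :
    hz.fiberPerm (v + w) = hz.fiberPerm v * hz.fiberPerm w := by
  refine Perm.ext fun x => ?_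
  rcases zmod_two_eq (v (b x)) with h | h <;> rcases zmod_two_eq (w (b x)) with h' | h' <;>
    simp [fiberPerm_apply, h, h', hz.map_apply, hz.apply_apply, CharTwo.add_self_eq_zero]

theorem fiberPerm_injective (hz : IsTwoFibration b z) : Function.Injective hz.fiberPerm := by
  intro v w h
  funext c
  obtain ⟨x, rfl⟩ := hz.surjective c
  have := Perm.ext_iff.1 h x
  have hne := hz.apply_ne x
  rcases zmod_two_eq (v (b x)) with h | h <;> rcases zmod_two_eq (w (b x)) with h' | h' <;>
    simp only [fiberPerm_apply, h, h', if_true, one_ne_zero, if_false] at this ⊢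
  · exact absurd this.symm hne
  · exact absurd this hne

theorem apply_comm (hz : IsTwoFibration b z) {g : Perm β} {p : Perm α} (hg : ∀ x, b (g x) = p (b x)) (x : β) :
    g (z x) = z (g x) :=
  (hz.eq_or_eq (g x) (g (z x)) (by rw [hg, hg, hz.map_apply])).resolve_left
    fun h => hz.apply_ne x (g.injective h)

theorem exists_fiberPerm_eq (hz : IsTwoFibration b z) {g : Perm β} (hg : ∀ x, b (g x) = b x) :
    ∃ w, hz.fiberPerm w = g := by
  classical
  refine ⟨fun c => if g (Function.surjInv hz.surjective c) = Function.surjInv hz.surjective c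
    then 0 else 1, Perm.ext fun x => ?_⟩
  have hcomm : ∀ y, g (z y) = z (g y) := hz.apply_comm (p := 1) hg
  have hy : b (Function.surjInv hz.surjective (b x)) = b x := Function.surjInv_eq _ _
  rw [fiberPerm_apply]
  generalize Function.surjInv hz.surjective (b x) = y at hy
  have hgy := hz.eq_or_eq y (g y) (hg y)
  rcases hz.eq_or_eq y x hy.symm with rfl | rfl
  · by_cases h : g x = x
    · simp [h]
    · rw [if_neg (by rw [if_neg h]; exact one_ne_zero), hgy.resolve_left h]
  · by_cases h : g y = y
    · simp [h, hcomm]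
    · rw [if_neg (by rw [if_neg h]; exact one_ne_zero), hcomm, hgy.resolve_left h]

theorem conj_fiberPerm (hz : IsTwoFibration b z) {g : Perm β} {p : Perm α} (hg : ∀ x, b (g x) = p (b x)) (w : α → ZMod 2) :
    g⁻¹ * hz.fiberPerm w * g = hz.fiberPerm fun c => w (p c) := by
  refine Perm.ext fun x => ?_
  rw [Perm.mul_apply, Perm.mul_apply, Perm.inv_eq_iff_eq, fiberPerm_apply, fiberPerm_apply, hg]
  by_cases h : w (p (b x)) = 0
  · simp [h]
  · simp [h, hz.apply_comm hg]

/-- The code of the fiber-preserving elements of a permutation group. -/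
def code (hz : IsTwoFibration b z) (X : Subgroup (Perm β)) : AddSubgroup (α → ZMod 2) where
  carrier := {w | hz.fiberPerm w ∈ X}
  zero_mem' := by
    change hz.fiberPerm 0 ∈ X
    rw [fiberPerm_zero]
    exact one_mem _
  add_mem' {v w} hv hw := by
    change hz.fiberPerm (v + w) ∈ X
    rw [fiberPerm_add]
    exact mul_mem hv hw
  neg_mem' {v} hv := by
    change hz.fiberPerm (-v) ∈ X
    rwa [show -v = v from funext fun c => ZMod.neg_eq_self_mod_two _]

theorem mem_code (hz : IsTwoFibration b z) {X : Subgroup (Perm β)} {w : α → ZMod 2} :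
    w ∈ hz.code X ↔ hz.fiberPerm w ∈ X := Iff.rfl

theorem code_mono (hz : IsTwoFibration b z) {X Y : Subgroup (Perm β)} (h : X ≤ Y) : hz.code X ≤ hz.code Y :=
  fun _ hw => h hw

theorem isInvariantCode_code (hz : IsTwoFibration b z) {X : Subgroup (Perm β)} {P : Subgroup (Perm α)}
    (hlift : ∀ p ∈ P, ∃ g ∈ X, ∀ x, b (g x) = p (b x)) : IsInvariantCode P (hz.code X) := by
  intro p hp w hw
  obtain ⟨g, hg, hgp⟩ := hlift p hp
  rw [mem_code, ← hz.conj_fiberPerm hgp]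
  exact mul_mem (mul_mem (inv_mem hg) hw) hg

/-- A nontrivial involution centralizing a group that induces a primitive group on the fibers
swaps every fiber. -/
theorem eq_of_commute (hz : IsTwoFibration b z) [Fintype α] (h3 : 3 ≤ Fintype.card α) {P : Subgroup (Perm α)}
    (hP : IsPrimitivePermGroup P) {X : Subgroup (Perm β)}
    (hlift : ∀ p ∈ P, ∃ g ∈ X, ∀ x, b (g x) = p (b x)) {g : Perm β} (hg1 : g ≠ 1)
    (hg2 : g * g = 1) {q : Perm α} (hgq : ∀ x, b (g x) = q (b x)) (hcomm : ∀ h ∈ X, Commute g h) :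
    g = z := by
  have hq : q = 1 := by
    refine hP.eq_one_of_commute h3 ?_ fun p hp => ?_
    · refine Perm.ext fun c => ?_
      obtain ⟨x, rfl⟩ := hz.surjective c
      rw [Perm.mul_apply, ← hgq, ← hgq, ← Perm.mul_apply, hg2, Perm.one_apply, Perm.one_apply]
    · obtain ⟨h, hh, hhp⟩ := hlift p hp
      refine Perm.ext fun c => ?_
      obtain ⟨x, rfl⟩ := hz.surjective c
      rw [Perm.mul_apply, Perm.mul_apply, ← hgq, ← hhp, ← hhp, ← hgq, ← Perm.mul_apply,
        ← Perm.mul_apply, (hcomm h hh).eq]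
  subst hq
  obtain ⟨w, rfl⟩ := hz.exists_fiberPerm_eq hgq
  have hinv : ∀ p ∈ P, ∀ c, w (p c) = w c := by
    intro p hp c
    obtain ⟨h, hh, hhp⟩ := hlift p hp
    have hw : (fun c => w (p c)) = w := hz.fiberPerm_injective (by
      rw [← hz.conj_fiberPerm hhp, mul_assoc, (hcomm h hh).eq, inv_mul_cancel_left])
    exact congrFun hw c
  rcases hP ⟨fun c d => w c = w d, fun _ => rfl, Eq.symm, Eq.trans⟩
    (fun p hp c d h => (hinv p hp c).trans (h.trans (hinv p hp d).symm)) with h | h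
  · have := Fintype.card_le_of_injective w fun c d => h c d
    rw [ZMod.card] at this
    omega
  · obtain ⟨c⟩ : Nonempty α := Fintype.card_pos_iff.1 (by omega)
    rcases zmod_two_eq (w c) with h' | h'
    · rw [show w = 0 from funext fun d => (h d c).trans h', fiberPerm_zero] at hg1
      exact absurd rfl hg1
    · rw [show w = 1 from funext fun d => (h d c).trans h', fiberPerm_one]

end IsTwoFibration

section Lift

variable {β α ι : Type*} {b : β → α} {ρ : ι → Perm β} {π : ι → Perm α}

theorem exists_lift (hπ : ∀ i x, b (ρ i x) = π i (b x)) (L : Set ι) :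
    ∀ p ∈ Subgroup.closure (π '' L), ∃ g ∈ Subgroup.closure (ρ '' L), ∀ x, b (g x) = p (b x) := by
  intro p hp
  induction hp using Subgroup.closure_induction with
  | mem p hp =>
    obtain ⟨i, hi, rfl⟩ := hp
    exact ⟨ρ i, Subgroup.subset_closure ⟨i, hi, rfl⟩, hπ i⟩
  | one => exact ⟨1, one_mem _, fun _ => rfl⟩
  | mul p q _ _ hp hq =>
    obtain ⟨g, hg, hgp⟩ := hp
    obtain ⟨h, hh, hhq⟩ := hq
    exact ⟨g * h, mul_mem hg hh, fun x => by rw [Perm.mul_apply, hgp, hhq, Perm.mul_apply]⟩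
  | inv p _ hp =>
    obtain ⟨g, hg, hgp⟩ := hp
    exact ⟨g⁻¹, inv_mem hg, fun x => by rw [Perm.eq_inv_iff_eq, ← hgp, Perm.coe_inv, apply_symm_apply]⟩

theorem exists_induced (hπ : ∀ i x, b (ρ i x) = π i (b x)) :
    ∀ g ∈ Subgroup.closure (Set.range ρ),
      ∃ p ∈ Subgroup.closure (Set.range π), ∀ x, b (g x) = p (b x) := by
  intro g hg
  induction hg using Subgroup.closure_induction with
  | mem g hg =>
    obtain ⟨i, rfl⟩ := hg
    exact ⟨π i, Subgroup.subset_closure ⟨i, rfl⟩, hπ i⟩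
  | one => exact ⟨1, one_mem _, fun _ => rfl⟩
  | mul g h _ _ hg hh =>
    obtain ⟨p, hp, hgp⟩ := hg
    obtain ⟨q, hq, hhq⟩ := hh
    exact ⟨p * q, mul_mem hp hq, fun x => by rw [Perm.mul_apply, hgp, hhq, Perm.mul_apply]⟩
  | inv g _ hg =>
    obtain ⟨p, hp, hgp⟩ := hg
    exact ⟨p⁻¹, inv_mem hp, fun x => by rw [Perm.eq_inv_iff_eq, ← hgp, Perm.coe_inv, apply_symm_apply]⟩

/-- The group induced on a system of maximal blocks is primitive. -/
theorem isPrimitivePermGroup_of_maximal_blocks (hπ : ∀ i x, b (ρ i x) = π i (b x))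
    (hb : Function.Surjective b)
    (hmax : ∀ (c : α) (X : Set β), MulAction.IsBlock (Subgroup.closure (Set.range ρ)) X →
      {x | b x = c} ⊆ X → X = {x | b x = c} ∨ X = Set.univ) :
    IsPrimitivePermGroup (Subgroup.closure (Set.range π)) := by
  intro s hs
  by_cases hdisc : ∀ x y, s x y → x = y
  · exact Or.inl hdisc
  right
  push Not at hdisc
  obtain ⟨d, c, hdc, hne⟩ := hdisc
  have hblock : MulAction.IsBlock (Subgroup.closure (Set.range ρ)) {x | s (b x) c} := by
    rw [MulAction.isBlock_iff_smul_eq_or_disjoint]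
    rintro ⟨g, hg⟩
    obtain ⟨p, hp, hgp⟩ := exists_induced hπ g hg
    rw [or_iff_not_imp_right, Set.not_disjoint_iff]
    rintro ⟨_, ⟨x, hx, rfl⟩, hgx⟩
    change s (b (g x)) c at hgx
    rw [hgp] at hgx
    have hpc : s (p c) c := s.trans (s.symm (hs p hp _ _ hx)) hgx
    ext y
    rw [Set.mem_smul_set_iff_inv_smul_mem]
    change s (b (g⁻¹ y)) c ↔ s (b y) c
    have hy : b y = p (b (g⁻¹ y)) := by rw [← hgp, Perm.coe_inv, apply_symm_apply]
    rw [hy]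
    refine ⟨fun h => s.trans (hs p hp _ _ h) hpc, fun h => ?_⟩
    have := hs p⁻¹ (inv_mem hp) _ _ (s.trans h (s.symm hpc))
    simpa using this
  rcases hmax c _ hblock (fun x (hx : b x = c) => hx ▸ s.refl (b x)) with h | h
  · obtain ⟨x, rfl⟩ := hb d
    exact absurd (h.subset hdc) hne
  · have hall : ∀ y, s y c := by
      intro y
      obtain ⟨x, rfl⟩ := hb y
      exact h.superset (Set.mem_univ x)
    exact fun x y => s.trans (hall x) (s.symm (hall y))

/-- Under the intersection property, at most two generators besides a generating set of the induced
primitive group and the fiber swap are possible when the group has a large elementary abelian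
2-subgroup. -/
theorem false_of_three_extra_generators [Fintype α] [DecidableEq α] {z : Perm β}
    (hz : IsTwoFibration b z) (hπ : ∀ i x, b (ρ i x) = π i (b x)) (hρ1 : ∀ i, ρ i ≠ 1)
    (hip : ∀ J K : Set ι, Subgroup.closure (ρ '' J) ⊓ Subgroup.closure (ρ '' K) =
      Subgroup.closure (ρ '' (J ∩ K))) {L : Set ι}
    (hLgen : ∀ i, π i ∈ Subgroup.closure (π '' L))
    (hP : IsPrimitivePermGroup (Subgroup.closure (π '' L))) (h7 : 7 ≤ Fintype.card α)
    {E : Subgroup (Perm α)} (hEP : E ≤ Subgroup.closure (π '' L)) (hE : ∀ g ∈ E, g * g = 1)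
    (hcard : 2 ^ Fintype.card α ≤ 8 * Nat.card E ^ 2) {p q k : ι} (hp : p ∉ L) (hq : q ∉ L)
    (hk : k ∉ L) (hpq : p ≠ q) (hpk : p ≠ k) (hqk : q ≠ k) (hkz : ρ k = z) : False := by
  have hmono : ∀ {X Y : Set ι}, X ⊆ Y → Subgroup.closure (ρ '' X) ≤ Subgroup.closure (ρ '' Y) :=
    fun h => Subgroup.closure_mono (Set.image_mono h)
  have hnot : ∀ {i : ι} {X : Set ι}, i ∉ X → ρ i ∉ Subgroup.closure (ρ '' X) := by
    intro i X hi h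
    have h' : ρ i ∈ Subgroup.closure (ρ '' {i}) ⊓ Subgroup.closure (ρ '' X) :=
      ⟨Subgroup.subset_closure ⟨i, rfl, rfl⟩, h⟩
    rw [hip, Set.singleton_inter_eq_empty.2 hi] at h'
    simp only [Set.image_empty, Subgroup.closure_empty, Subgroup.mem_bot] at h'
    exact hρ1 i h'
  have hinv : ∀ X, L ⊆ X → IsInvariantCode (Subgroup.closure (π '' L))
      (hz.code (Subgroup.closure (ρ '' X))) := by
    intro X hX
    refine hz.isInvariantCode_code fun s hs => ?_
    obtain ⟨g, hg, h⟩ := exists_lift hπ L s hs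
    exact ⟨g, hmono hX hg, h⟩
  have hnle : ∀ i j, i ≠ j → i ∉ L →
      ¬ hz.code (Subgroup.closure (ρ '' insert i L)) ≤
        hz.code (Subgroup.closure (ρ '' insert j L)) := by
    intro i j hij hi h
    obtain ⟨g, hg, hgi⟩ := exists_lift hπ L (π i) (hLgen i)
    obtain ⟨w, hw⟩ := hz.exists_fiberPerm_eq (g := ρ i * g⁻¹) fun x => by
      rw [Perm.mul_apply, hπ, ← hgi, Perm.coe_inv, apply_symm_apply]
    have hwi : w ∈ hz.code (Subgroup.closure (ρ '' insert i L)) := by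
      rw [hz.mem_code, hw]
      exact mul_mem (Subgroup.subset_closure ⟨i, Set.mem_insert i L, rfl⟩)
        (inv_mem (hmono (Set.subset_insert i L) hg))
    have hwj := h hwi
    rw [hz.mem_code, hw] at hwj
    have := mul_mem hwj (hmono (Set.subset_insert j L) hg)
    rw [inv_mul_cancel_right] at this
    exact hnot (by simp [hij, hi]) this
  rcases le_or_le_of_isInvariantCode hP h7 hEP hE hcard
    (V := hz.code (Subgroup.closure (ρ '' insert p (insert q L))))
    (fun h => hnot (i := k) (X := insert p (insert q L)) (by simp [hk, hpk.symm, hqk.symm]) (by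
      rw [hz.mem_code, hz.fiberPerm_one] at h
      rwa [hkz]))
    (hz.code_mono (hmono (Set.insert_subset_insert (Set.subset_insert q L))))
    (hz.code_mono (hmono (Set.subset_insert p (insert q L))))
    (hinv _ (Set.subset_insert p L)) (hinv _ (Set.subset_insert q L)) with h | h
  · exact hnle p q hpq hp h
  · exact hnle q p hpq.symm hq h

end Lift

/-- The indices outside `S` next to an element of `S`. -/
def adjacentIndices {r : ℕ} (S : Set (Fin r)) : Set (Fin r) :=
  {i | i ∉ S ∧ ∃ l ∈ S, (i : ℕ) = l + 1 ∨ (l : ℕ) = i + 1}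

theorem ncard_adjacentIndices_le_two {r : ℕ} {S : Set (Fin r)}
    (hgap : ∀ i ∉ S, ∀ a ∈ S, ∀ c ∈ S, a < i → ¬ i < c) : (adjacentIndices S).ncard ≤ 2 := by
  have hsub : adjacentIndices S ⊆ {i | i ∉ S ∧ ∃ l ∈ S, (i : ℕ) = l + 1} ∪
      {i | i ∉ S ∧ ∃ l ∈ S, (l : ℕ) = i + 1} := by
    rintro i ⟨hi, l, hl, h | h⟩
    · exact Or.inl ⟨hi, l, hl, h⟩
    · exact Or.inr ⟨hi, l, hl, h⟩
  have hup : {i : Fin r | i ∉ S ∧ ∃ l ∈ S, (i : ℕ) = l + 1}.ncard ≤ 1 := by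
    rw [Set.ncard_le_one]
    have key : ∀ i, (i ∉ S ∧ ∃ l ∈ S, (i : ℕ) = l + 1) → ∀ j, (j ∉ S ∧ ∃ l ∈ S, (j : ℕ) = l + 1) →
        ¬ i < j := by
      rintro i ⟨hi, l, hl, hil⟩ j ⟨hj, k, hk, hjk⟩ hij
      have hik : k ≠ i := fun e => hi (e ▸ hk)
      exact hgap i hi l hl k hk (by omega) (by omega)
    exact fun i hi j hj => le_antisymm (not_lt.1 (key j hj i hi)) (not_lt.1 (key i hi j hj))
  have hdown : {i : Fin r | i ∉ S ∧ ∃ l ∈ S, (l : ℕ) = i + 1}.ncard ≤ 1 := by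
    rw [Set.ncard_le_one]
    have key : ∀ i, (i ∉ S ∧ ∃ l ∈ S, (l : ℕ) = i + 1) → ∀ j, (j ∉ S ∧ ∃ l ∈ S, (l : ℕ) = j + 1) →
        ¬ i < j := by
      rintro i ⟨hi, l, hl, hil⟩ j ⟨hj, k, hk, hjk⟩ hij
      have hjl : l ≠ j := fun e => hj (e ▸ hl)
      exact hgap j hj l hl k hk (by omega) (by omega)
    exact fun i hi j hj => le_antisymm (not_lt.1 (key j hj i hi)) (not_lt.1 (key i hi j hj))
  have := (Set.ncard_le_ncard hsub).trans (Set.ncard_union_le _ _)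
  omega

theorem sq_lt_two_pow_sub_five {m : ℕ} (hm : 16 ≤ m) : m * m < 2 ^ (m - 5) := by
  induction m, hm using Nat.le_induction with
  | base => norm_num
  | succ m hm ih =>
    rw [show m + 1 - 5 = m - 5 + 1 by omega, pow_succ]
    nlinarith

theorem no_large_commuting_parts {m s t : ℕ} (hm : 12 ≤ m) (hs : 2 ^ s ≤ m) (ht : 2 ^ t ≤ m) :
    s + t + 5 < m := by
  by_contra! h
  by_cases h16 : 16 ≤ m
  · have h1 := sq_lt_two_pow_sub_five h16
    have h2 : 2 ^ (m - 5) ≤ 2 ^ (s + t) := Nat.pow_le_pow_right (by norm_num) (by omega)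
    rw [pow_add] at h2
    have := Nat.mul_le_mul hs ht
    omega
  · have key : ∀ k, 2 ^ k ≤ m → k ≤ 3 := fun k hk => by
      by_contra! h4
      have := Nat.pow_le_pow_right (n := 2) (by norm_num) h4
      omega
    have := key s hs
    have := key t ht
    omega

theorem mul_self_eq_one_of_mem_closure {G : Type*} [Group G] {X : Set G}
    (h2 : ∀ x ∈ X, x * x = 1) (hcomm : ∀ x ∈ X, ∀ y ∈ X, Commute x y) :
    ∀ g ∈ Subgroup.closure X, g * g = 1 := by
  have := Subgroup.isMulCommutative_closure fun x hx y hy => (hcomm x hx y hy).eq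
  intro g hg
  induction hg using Subgroup.closure_induction with
  | mem x hx => exact h2 x hx
  | one => exact one_mul 1
  | mul x y hx hy hxx hyy =>
    have hxy : x * y = y * x := congrArg Subtype.val
      (mul_comm' (⟨x, hx⟩ : Subgroup.closure X) ⟨y, hy⟩)
    rw [mul_assoc, ← mul_assoc y, ← hxy, mul_assoc, hyy, mul_one, hxx]
  | inv x _ hx => rw [← mul_inv_rev, hx, inv_one]

/-- Independent involutions indexed along a string generate a group with a large elementary
abelian 2-subgroup. -/
theorem exists_large_elementary_abelian {G : Type*} [Group G] [Finite G] {r : ℕ} {π : Fin r → G}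
    (hπ : ∀ i, π i * π i = 1) (hcomm : ∀ i j : Fin r, (i : ℕ) + 1 < j → Commute (π i) (π j))
    {L : Set (Fin r)} (hind : ∀ l ∈ L, π l ∉ Subgroup.closure (π '' (L \ {l}))) :
    ∃ E ≤ Subgroup.closure (π '' L), (∀ g ∈ E, g * g = 1) ∧ 2 ^ L.ncard ≤ Nat.card E ^ 2 := by
  have helem : ∀ k, ∀ g ∈ Subgroup.closure (π '' {l ∈ L | (l : ℕ) % 2 = k}), g * g = 1 := by
    intro k
    apply mul_self_eq_one_of_mem_closure
    · rintro _ ⟨i, _, rfl⟩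
      exact hπ i
    · rintro _ ⟨i, ⟨_, hi⟩, rfl⟩ _ ⟨j, ⟨_, hj⟩, rfl⟩
      rcases lt_trichotomy (i : ℕ) j with h | h | h
      · exact hcomm i j (by omega)
      · rw [Fin.ext h]
      · exact (hcomm j i (by omega)).symm
  have hcard : ∀ k, 2 ^ {l ∈ L | (l : ℕ) % 2 = k}.ncard ≤
      Nat.card (Subgroup.closure (π '' {l ∈ L | (l : ℕ) % 2 = k})) := fun k =>
    two_pow_ncard_le_card_closure π _ fun l hl h => hind l hl.1
      (Subgroup.closure_mono (Set.image_mono (Set.sdiff_subset_sdiff_left fun _ h => h.1)) h)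
  have hle : ∀ k, Subgroup.closure (π '' {l ∈ L | (l : ℕ) % 2 = k}) ≤ Subgroup.closure (π '' L) :=
    fun k => Subgroup.closure_mono (Set.image_mono fun _ h => h.1)
  have hL : L.ncard ≤ {l ∈ L | (l : ℕ) % 2 = 0}.ncard + {l ∈ L | (l : ℕ) % 2 = 1}.ncard := by
    refine le_trans (Set.ncard_le_ncard fun l hl => ?_) (Set.ncard_union_le _ _)
    rcases Nat.mod_two_eq_zero_or_one l with h | h
    · exact Or.inl ⟨hl, h⟩
    · exact Or.inr ⟨hl, h⟩
  have hpow := (Nat.pow_le_pow_right (n := 2) (by norm_num) hL).trans_eq (pow_add _ _ _)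
  have hprod := hpow.trans (Nat.mul_le_mul (hcard 0) (hcard 1))
  rcases le_total (Nat.card (Subgroup.closure (π '' {l ∈ L | (l : ℕ) % 2 = 0})))
    (Nat.card (Subgroup.closure (π '' {l ∈ L | (l : ℕ) % 2 = 1}))) with h | h
  · exact ⟨_, hle 1, helem 1, by nlinarith⟩
  · exact ⟨_, hle 0, helem 0, by nlinarith⟩

theorem stmt13 {n r m : ℕ} (hm7 : 7 ≤ m) (hn : n = 2 * m) (hr : n / 2 ≤ r)
    (ρ : Fin r → Equiv.Perm (Fin n)) (hstring : IsStringC ρ)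
    (htrans : MulAction.IsPretransitive ↥(Subgroup.closure (Set.range ρ)) (Fin n))
    (b : Fin n → Fin m) (hbsurj : Function.Surjective b)
    (hfib : ∀ c : Fin m, Set.ncard {x | b x = c} = 2)
    (hcompat : ∀ g ∈ Subgroup.closure (Set.range ρ), ∀ x y : Fin n,
      b x = b y → b (g x) = b (g y))
    -- every fiber of b is a maximal block
    (hmax : ∀ (c : Fin m) (X : Set (Fin n)),
      MulAction.IsBlock ↥(Subgroup.closure (Set.range ρ)) X →
      {x | b x = c} ⊆ X → X = {x | b x = c} ∨ X = Set.univ)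
    -- π l is the induced block permutation φ (ρ l)
    (π : Fin r → Equiv.Perm (Fin m))
    (hπ : ∀ (l : Fin r) (x : Fin n), b (ρ l x) = π l (b x))
    -- L generates the image of φ independently
    (L : Set (Fin r))
    (hLgen : Subgroup.closure (π '' L) = Subgroup.closure (Set.range π))
    (hLind : ∀ l ∈ L, π l ∉ Subgroup.closure (π '' (L \ {l}))) :
    ({i : Fin r | i ∉ L ∧ ¬ ∀ l ∈ L, Commute (ρ i) (ρ l)} ∪
      {i : Fin r | i ∉ L ∧ ∀ l ∈ L, Commute (ρ i) (ρ l)}).ncard ≤ 2 ∧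
    n / 2 - 2 ≤ L.ncard := by
  have hnm : n / 2 = m := by omega
  rw [hnm] at hr ⊢
  have hunion : {i : Fin r | i ∉ L ∧ ¬ ∀ l ∈ L, Commute (ρ i) (ρ l)} ∪
      {i : Fin r | i ∉ L ∧ ∀ l ∈ L, Commute (ρ i) (ρ l)} = Lᶜ := by
    ext i
    simp only [Set.mem_union, Set.mem_ofPred_eq, Set.mem_compl_iff]
    tauto
  have hcompl : L.ncard + Lᶜ.ncard = r := by
    rw [Set.ncard_add_ncard_compl, Nat.card_fin]
  rw [hunion]
  suffices h : Lᶜ.ncard ≤ 2 from ⟨h, by omega⟩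
  obtain ⟨⟨horder, hstr⟩, hip⟩ := hstring
  have hρ1 : ∀ i, ρ i ≠ 1 := fun i h => by
    have := horder i
    rw [h, orderOf_one] at this
    omega
  have hρ2 : ∀ i, ρ i * ρ i = 1 := fun i => by rw [← pow_two, ← horder i, pow_orderOf_eq_one]
  have hρcomm : ∀ i j : Fin r, (i : ℕ) + 1 < j → Commute (ρ i) (ρ j) := by
    intro i j hij
    have h := hstr i j (by rw [abs_sub_comm, lt_abs]; left; omega)
    have hinv : ∀ i, (ρ i)⁻¹ = ρ i := fun i => inv_eq_of_mul_eq_one_left (hρ2 i)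
    rw [pow_two] at h
    have h' := eq_inv_of_mul_eq_one_left h
    rwa [mul_inv_rev, hinv, hinv] at h'
  have hπ2 : ∀ i, π i * π i = 1 := fun i => Perm.ext fun c => by
    obtain ⟨x, rfl⟩ := hbsurj c
    rw [Perm.mul_apply, ← hπ, ← hπ, ← Perm.mul_apply, hρ2, Perm.one_apply, Perm.one_apply]
  have hπcomm : ∀ i j : Fin r, (i : ℕ) + 1 < j → Commute (π i) (π j) := fun i j hij =>
    Perm.ext fun c => by
      obtain ⟨x, rfl⟩ := hbsurj c
      rw [Perm.mul_apply, Perm.mul_apply, ← hπ, ← hπ, ← hπ, ← hπ, ← Perm.mul_apply,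
        (hρcomm i j hij).eq, Perm.mul_apply]
  have hP : IsPrimitivePermGroup (Subgroup.closure (π '' L)) := by
    rw [hLgen]
    exact isPrimitivePermGroup_of_maximal_blocks hπ hbsurj hmax
  have hcardm : Fintype.card (Fin m) = m := Fintype.card_fin m
  obtain ⟨z, hz⟩ := exists_isTwoFibration hbsurj hfib
  have hCz : ∀ i, (∀ l ∈ L, Commute (ρ i) (ρ l)) → ρ i = z := by
    intro i hi
    refine hz.eq_of_commute (by omega) hP (exists_lift hπ L) (hρ1 i) (hρ2 i) (hπ i) fun h hh => ?_
    have : Subgroup.closure (ρ '' L) ≤ Subgroup.centralizer {ρ i} := by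
      rw [Subgroup.closure_le]
      rintro _ ⟨l, hl, rfl⟩ _ rfl
      exact (hi l hl).eq
    exact this hh _ rfl
  have hinj : Function.Injective ρ := by
    intro i j hij
    by_contra hne
    have h : ρ i ∈ Subgroup.closure (ρ '' {i}) ⊓ Subgroup.closure (ρ '' {j}) :=
      ⟨Subgroup.subset_closure ⟨i, rfl, rfl⟩, hij ▸ Subgroup.subset_closure ⟨j, rfl, rfl⟩⟩
    rw [hip, Set.singleton_inter_eq_empty.2 (by simpa using hne)] at h
    simp only [Set.image_empty, Subgroup.closure_empty, Subgroup.mem_bot] at h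
    exact hρ1 i h
  have hC1 : {i : Fin r | i ∉ L ∧ ∀ l ∈ L, Commute (ρ i) (ρ l)}.ncard ≤ 1 := by
    rw [Set.ncard_le_one]
    exact fun i hi j hj => hinj ((hCz i hi.2).trans (hCz j hj.2).symm)
  have hsub : Lᶜ ⊆ {i : Fin r | i ∉ L ∧ ∀ l ∈ L, Commute (ρ i) (ρ l)} ∪ adjacentIndices L := by
    intro i hi
    by_cases h : ∀ l ∈ L, Commute (ρ i) (ρ l)
    · exact Or.inl ⟨hi, h⟩
    · push Not at h
      obtain ⟨l, hl, hil⟩ := h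
      refine Or.inr ⟨hi, l, hl, ?_⟩
      have hne : (i : ℕ) ≠ l := fun e => hi (Fin.ext e ▸ hl)
      by_contra! hcon
      rcases lt_or_gt_of_ne hne with h | h
      · exact hil (hρcomm i l (by omega))
      · exact hil (hρcomm l i (by omega)).symm
  have hM := (Set.ncard_le_ncard hsub).trans (Set.ncard_union_le _ _)
  by_cases hgap : ∀ i ∉ L, ∀ a ∈ L, ∀ c ∈ L, a < i → ¬ i < c
  · have hadj := ncard_adjacentIndices_le_two hgap
    by_contra! h3
    obtain ⟨k, hkL, hk⟩ : {i : Fin r | i ∉ L ∧ ∀ l ∈ L, Commute (ρ i) (ρ l)}.Nonempty := by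
      rw [← Set.ncard_pos]
      omega
    have h2 : 1 < (Lᶜ \ {k}).ncard := by
      rw [Set.ncard_sdiff_singleton_of_mem hkL]
      omega
    obtain ⟨p, q, ⟨hp, hpk⟩, ⟨hq, hqk⟩, hpq⟩ := (Set.one_lt_ncard_iff).1 h2
    obtain ⟨E, hEP, hE, hEcard⟩ := exists_large_elementary_abelian hπ2 hπcomm hLind
    refine false_of_three_extra_generators hz hπ hρ1 hip (fun i => ?_) hP (by omega) hEP hE ?_
      hp hq hkL hpq hpk hqk (hCz k hk)
    · rw [hLgen]
      exact Subgroup.subset_closure ⟨i, rfl⟩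
    · rw [hcardm]
      calc 2 ^ m ≤ 2 ^ (3 + L.ncard) := Nat.pow_le_pow_right (by norm_num) (by omega)
        _ = 8 * 2 ^ L.ncard := by rw [pow_add]; norm_num
        _ ≤ _ := Nat.mul_le_mul_left 8 hEcard
  · exfalso
    push Not at hgap
    obtain ⟨g, hg, a, ha, c, hc, hag, hgc⟩ := hgap
    have hparts : ∀ {X : Set (Fin r)} {i}, i ∉ X → {l ∈ X | l < i} ∪ {l ∈ X | i < l} = X := by
      intro X i hi
      ext l
      constructor
      · rintro (h | h) <;> exact h.1
      · intro hl
        rcases lt_trichotomy l i with h | h | h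
        · exact Or.inl ⟨hl, h⟩
        · exact absurd (h ▸ hl) hi
        · exact Or.inr ⟨hl, h⟩
    have hpcomm : ∀ (X : Set (Fin r)) (i), ∀ s ∈ {l ∈ X | l < i}, ∀ t ∈ {l ∈ X | i < l},
        Commute (π s) (π t) := by
      rintro X i s ⟨_, hs⟩ t ⟨_, ht⟩
      exact hπcomm s t (by omega)
    have hSL := hparts hg
    have key : ∀ {S S' : Set (Fin r)}, S ∪ S' = L → S.Nonempty → S'.Nonempty →
        (∀ s ∈ S, ∀ s' ∈ S', Commute (π s) (π s')) →
        12 ≤ m ∧ 2 ^ S.ncard ≤ m ∧ (adjacentIndices S).ncard ≤ 2 := by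
      rintro S S' rfl hS hS' hSS
      obtain ⟨h12, hpow, hsplit⟩ :=
        bounds_of_commuting_parts (by omega) hπ2 hP hLind hSS hS hS'
      rw [hcardm] at h12 hpow
      refine ⟨h12, hpow, ncard_adjacentIndices_le_two fun i hi a ha c hc hai hic => ?_⟩
      refine hsplit _ _ (hparts hi) ?_ ⟨a, ha, hai⟩ ⟨c, hc, hic⟩ (hpcomm S i)
      exact Set.disjoint_left.2 fun l h h' => lt_asymm h.2 h'.2
    obtain ⟨h12, hs, hadj⟩ := key hSL ⟨a, ha, hag⟩ ⟨c, hc, hgc⟩ (hpcomm L g)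
    obtain ⟨-, hs', hadj'⟩ := key ((Set.union_comm _ _).trans hSL) ⟨c, hc, hgc⟩ ⟨a, ha, hag⟩
      fun s hs t ht => (hpcomm L g t ht s hs).symm
    have hadjsub : adjacentIndices L ⊆
        adjacentIndices {l ∈ L | l < g} ∪ adjacentIndices {l ∈ L | g < l} := by
      rintro i ⟨hi, l, hl, h⟩
      rw [← hSL] at hl
      exact hl.imp (fun hl => ⟨fun h => hi h.1, l, hl, h⟩) fun hl => ⟨fun h => hi h.1, l, hl, h⟩
    have hadjL := (Set.ncard_le_ncard hadjsub).trans (Set.ncard_union_le _ _)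
    have hLcard := Set.ncard_union_le {l ∈ L | l < g} {l ∈ L | g < l}
    rw [hSL] at hLcard
    have := no_large_commuting_parts h12 hs hs'
    omega
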